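/- A BIBS system is OLIOS if and only if it admits an OLIOS-Lyapunov function. -/

import Mathlib

open MeasureTheory Set Filter Topology
open scoped ENNReal NNReal

noncomputable section

/-- A function of class `K`: continuous, strictly increasing on `[0,∞)` and vanishing at `0`. -/
def IsClassK (α : ℝ → ℝ) : Prop :=
  ContinuousOn α (Ici 0) ∧ StrictMonoOn α (Ici 0) ∧ α 0 = 0

/-- A function of class `K∞`: class `K` and unbounded. -/
def IsClassKInfty (α : ℝ → ℝ) : Prop :=
  IsClassK α ∧ Tendsto α atTop atTop

/-- A function of class `KL`. -/
def IsClassKL (β : ℝ → ℝ → ℝ) : Prop :=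
  (∀ t ∈ Ici (0:ℝ), IsClassK fun s => β s t) ∧
  ∀ s ∈ Ici (0:ℝ), AntitoneOn (fun t => β s t) (Ici 0) ∧
    Tendsto (fun t => β s t) atTop (𝓝 0)

/-- Admissible inputs: measurable and locally essentially bounded on `[0,∞)`. -/
def IsInput {m : ℕ} (u : ℝ → EuclideanSpace ℝ (Fin m)) : Prop :=
  Measurable u ∧ ∀ T > (0:ℝ), ∃ C : ℝ, ∀ᵐ t ∂(volume.restrict (Icc 0 T)), ‖u t‖ ≤ C

/-- The essential supremum norm of an input over `[0,∞)`, as an extended nonnegative real. -/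
def uNormE {m : ℕ} (u : ℝ → EuclideanSpace ℝ (Fin m)) : ℝ≥0∞ :=
  essSup (fun t => (‖u t‖₊ : ℝ≥0∞)) (volume.restrict (Ici 0))

/-- An input which is (globally) essentially bounded on `[0,∞)`. -/
def BddInput {m : ℕ} (u : ℝ → EuclideanSpace ℝ (Fin m)) : Prop := uNormE u ≠ ⊤

/-- The essential supremum norm `‖u‖` of an input, as a real number. -/
def uNorm {m : ℕ} (u : ℝ → EuclideanSpace ℝ (Fin m)) : ℝ := (uNormE u).toReal

/-- `x` is the solution map of the forward-complete system `ẋ = f(x,u)`: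
for every initial state `ξ` and admissible input `u`, `t ↦ x t ξ u` solves the corresponding
integral equation on all of `[0,∞)`. -/
def IsSolutionMap {n m : ℕ}
    (f : EuclideanSpace ℝ (Fin n) → EuclideanSpace ℝ (Fin m) → EuclideanSpace ℝ (Fin n))
    (x : ℝ → EuclideanSpace ℝ (Fin n) → (ℝ → EuclideanSpace ℝ (Fin m)) →
      EuclideanSpace ℝ (Fin n)) : Prop :=
  ∀ ξ u, IsInput u → ∀ t ∈ Ici (0:ℝ),
    x t ξ u = ξ + ∫ s in (0:ℝ)..t, f (x s ξ u) (u s)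

/-- The system is bounded-input bounded-state (BIBS): it is forward complete (encoded by the
solution-map property) and trajectories are bounded in terms of a class-`K` function of the
initial state and of the input norm. -/
def IsBIBS {n m : ℕ}
    (f : EuclideanSpace ℝ (Fin n) → EuclideanSpace ℝ (Fin m) → EuclideanSpace ℝ (Fin n))
    (x : ℝ → EuclideanSpace ℝ (Fin n) → (ℝ → EuclideanSpace ℝ (Fin m)) →
      EuclideanSpace ℝ (Fin n)) : Prop :=
  IsSolutionMap f x ∧ ∃ σ : ℝ → ℝ, IsClassK σ ∧ ∀ ξ u, IsInput u → BddInput u →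
    ∀ t ∈ Ici (0:ℝ), ‖x t ξ u‖ ≤ max (σ ‖ξ‖) (σ (uNorm u))

/-- Input-to-output stability (IOS). -/
def IsIOS {n m p : ℕ}
    (h : EuclideanSpace ℝ (Fin n) → EuclideanSpace ℝ (Fin p))
    (x : ℝ → EuclideanSpace ℝ (Fin n) → (ℝ → EuclideanSpace ℝ (Fin m)) →
      EuclideanSpace ℝ (Fin n)) : Prop :=
  ∃ β γ, IsClassKL β ∧ IsClassK γ ∧ ∀ ξ u, IsInput u → BddInput u →
    ∀ t ∈ Ici (0:ℝ), ‖h (x t ξ u)‖ ≤ max (β ‖ξ‖ t) (γ (uNorm u))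

/-- Output-Lagrange input-to-output stability (OLIOS): IOS together with an output-Lagrange
estimate. -/
def IsOLIOS {n m p : ℕ}
    (h : EuclideanSpace ℝ (Fin n) → EuclideanSpace ℝ (Fin p))
    (x : ℝ → EuclideanSpace ℝ (Fin n) → (ℝ → EuclideanSpace ℝ (Fin m)) →
      EuclideanSpace ℝ (Fin n)) : Prop :=
  IsIOS h x ∧ ∃ σ₀ : ℝ → ℝ, IsClassK σ₀ ∧ ∀ ξ u, IsInput u → BddInput u →
    ∀ t ∈ Ici (0:ℝ), ‖h (x t ξ u)‖ ≤ max (σ₀ ‖h ξ‖) (σ₀ (uNorm u))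

/-- An OLIOS-Lyapunov function for the system `ẋ = f(x,u)`, `y = h(x)`. -/
def IsOLIOSLyapunov {n m p : ℕ}
    (f : EuclideanSpace ℝ (Fin n) → EuclideanSpace ℝ (Fin m) → EuclideanSpace ℝ (Fin n))
    (h : EuclideanSpace ℝ (Fin n) → EuclideanSpace ℝ (Fin p))
    (V : EuclideanSpace ℝ (Fin n) → ℝ) : Prop :=
  ContDiff ℝ (⊤:ℕ∞) V ∧ (∀ ξ, 0 ≤ V ξ) ∧
  (∃ α₁ α₂ : ℝ → ℝ, IsClassKInfty α₁ ∧ IsClassKInfty α₂ ∧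
    ∀ ξ, α₁ ‖h ξ‖ ≤ V ξ ∧ V ξ ≤ α₂ ‖h ξ‖) ∧
  ∃ χ : ℝ → ℝ, IsClassK χ ∧ ∃ α₃ : ℝ → ℝ → ℝ,
    (∀ r ∈ Ici (0:ℝ), IsClassK fun s => α₃ s r) ∧
    (∀ s ∈ Ici (0:ℝ), AntitoneOn (fun r => α₃ s r) (Ici 0)) ∧
    ∀ ξ μ, χ ‖μ‖ ≤ V ξ → fderiv ℝ V ξ (f ξ μ) ≤ -α₃ (V ξ) ‖ξ‖

namespace IsClassK

variable {α β : ℝ → ℝ}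

lemma nonneg (hα : IsClassK α) {s : ℝ} (hs : 0 ≤ s) : 0 ≤ α s := by
  have := hα.2.1.monotoneOn self_mem_Ici hs hs
  rwa [hα.2.2] at this

lemma pos (hα : IsClassK α) {s : ℝ} (hs : 0 < s) : 0 < α s := by
  have := hα.2.1 self_mem_Ici hs.le hs
  rwa [hα.2.2] at this

lemma mono (hα : IsClassK α) {s t : ℝ} (hs : 0 ≤ s) (hst : s ≤ t) : α s ≤ α t :=
  hα.2.1.monotoneOn hs (hs.trans hst) hst

lemma add (hα : IsClassK α) (hβ : IsClassK β) : IsClassK fun s => α s + β s :=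
  ⟨hα.1.add hβ.1, fun _ ha _ hb hab => add_lt_add (hα.2.1 ha hb hab) (hβ.2.1 ha hb hab),
    by simp [hα.2.2, hβ.2.2]⟩

lemma const_mul (hα : IsClassK α) {c : ℝ} (hc : 0 < c) : IsClassK fun s => c * α s :=
  ⟨continuousOn_const.mul hα.1,
    fun _ ha _ hb hab => mul_lt_mul_of_pos_left (hα.2.1 ha hb hab) hc, by simp [hα.2.2]⟩

lemma comp (hα : IsClassK α) (hβ : IsClassK β) : IsClassK fun s => α (β s) :=
  ⟨hα.1.comp hβ.1 fun _ hs => hβ.nonneg hs,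
    fun _ ha _ hb hab => hα.2.1 (hβ.nonneg ha) (hβ.nonneg hb) (hβ.2.1 ha hb hab),
    by simp [hα.2.2, hβ.2.2]⟩

lemma id : IsClassK fun s => s :=
  ⟨continuousOn_id, fun _ _ _ _ hab => hab, rfl⟩

lemma add_id (hα : IsClassK α) : IsClassKInfty fun s => α s + s := by
  refine ⟨hα.add id, tendsto_atTop_mono' _ ?_ tendsto_id⟩
  filter_upwards [eventually_ge_atTop 0] with s hs
  simpa using hα.nonneg hs

end IsClassK

/-- A class `K∞` function has a class `K` inverse. -/
lemma IsClassKInfty.exists_inverse {α : ℝ → ℝ} (hα : IsClassKInfty α) :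
    ∃ ρ : ℝ → ℝ, IsClassK ρ ∧ ∀ s, 0 ≤ s → ρ (α s) = s := by
  obtain ⟨hK, htop⟩ := hα
  have himg : α '' Ici 0 = Ici 0 := by
    apply Subset.antisymm
    · rintro _ ⟨s, hs, rfl⟩
      exact hK.nonneg hs
    · intro y hy
      obtain ⟨b, hb, hb0⟩ := ((htop.eventually_ge_atTop y).and (eventually_ge_atTop 0)).exists
      have := intermediate_value_Icc hb0 (hK.1.mono Icc_subset_Ici_self)
      obtain ⟨s, hs, rfl⟩ := this ⟨by rw [hK.2.2]; exact hy, hb⟩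
      exact ⟨s, hs.1, rfl⟩
  have hinv : ∀ s, 0 ≤ s → Function.invFunOn α (Ici 0) (α s) = s := fun s hs =>
    hK.2.1.injOn.leftInvOn_invFunOn hs
  have hsurj : ∀ y, 0 ≤ y → ∃ s, 0 ≤ s ∧ α s = y := fun y hy => by
    have : y ∈ α '' Ici 0 := by rw [himg]; exact hy
    exact this
  have hmono : StrictMonoOn (Function.invFunOn α (Ici 0)) (Ici 0) := by
    intro a ha b hb hab
    obtain ⟨s, hs, rfl⟩ := hsurj a ha
    obtain ⟨t, ht, rfl⟩ := hsurj b hb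
    rw [hinv s hs, hinv t ht]
    exact (hK.2.1.lt_iff_lt hs ht).1 hab
  refine ⟨Function.invFunOn α (Ici 0), ⟨?_, hmono, ?_⟩, hinv⟩
  · have himg' : Function.invFunOn α (Ici 0) '' Ici 0 = Ici 0 := by
      apply Subset.antisymm
      · rintro _ ⟨y, hy, rfl⟩
        obtain ⟨s, hs, rfl⟩ := hsurj y hy
        rw [hinv s hs]
        exact hs
      · intro s hs
        exact ⟨α s, hK.nonneg hs, hinv s hs⟩
    have hcont : Continuous
        (hmono.orderIso (Function.invFunOn α (Ici 0)) (Ici 0)) := by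
      have : OrdConnected (Function.invFunOn α (Ici 0) '' Ici 0) := by
        rw [himg']; exact ordConnected_Ici
      exact OrderIso.continuous _
    rw [continuousOn_iff_continuous_domRestrict]
    exact continuous_subtype_val.comp hcont
  · have := hinv 0 le_rfl
    rwa [hK.2.2] at this

/-- The average of `g` over `[r, 2r]`. -/
def dyadicAvg (g : ℝ → ℝ) (r : ℝ) : ℝ := ∫ τ in (1:ℝ)..2, g (r * τ)

section dyadicAvg

variable {g : ℝ → ℝ}

lemma intervalIntegrable_comp_mul (hg : Monotone g) {r : ℝ} (hr : 0 ≤ r) :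
    IntervalIntegrable (fun τ => g (r * τ)) volume 1 2 :=
  Monotone.intervalIntegrable fun _ _ hab => hg (mul_le_mul_of_nonneg_left hab hr)

lemma le_dyadicAvg (hg : Monotone g) {r : ℝ} (hr : 0 ≤ r) : g r ≤ dyadicAvg g r := by
  have : ∫ _ in (1:ℝ)..2, g r ≤ dyadicAvg g r :=
    intervalIntegral.integral_mono_on (by norm_num) (by simp)
      (intervalIntegrable_comp_mul hg hr) fun τ hτ => hg (by nlinarith [hτ.1])
  norm_num at this
  exact this

lemma dyadicAvg_le (hg : Monotone g) {r : ℝ} (hr : 0 ≤ r) : dyadicAvg g r ≤ g (2 * r) := by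
  have : dyadicAvg g r ≤ ∫ _ in (1:ℝ)..2, g (2 * r) :=
    intervalIntegral.integral_mono_on (by norm_num)
      (intervalIntegrable_comp_mul hg hr) (by simp) fun τ hτ => hg (by nlinarith [hτ.2])
  norm_num at this
  exact this

lemma dyadicAvg_monotoneOn (hg : Monotone g) : MonotoneOn (dyadicAvg g) (Ici 0) := fun _ ha _ hb hab =>
  intervalIntegral.integral_mono_on (by norm_num) (intervalIntegrable_comp_mul hg ha)
    (intervalIntegrable_comp_mul hg hb) fun _ hτ =>
      hg (mul_le_mul_of_nonneg_right hab (by linarith [hτ.1]))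

lemma continuousOn_dyadicAvg (hg : Monotone g) : ContinuousOn (dyadicAvg g) (Ioi 0) := by
  have h1 : ∀ r ∈ Ioi (0:ℝ), dyadicAvg g r =
      r⁻¹ * ((∫ τ in (0:ℝ)..(2 * r), g τ) - ∫ τ in (0:ℝ)..r, g τ) := by
    intro r hr
    have hr' : r ≠ 0 := (mem_Ioi.1 hr).ne'
    rw [dyadicAvg, intervalIntegral.integral_comp_mul_left _ hr',
      intervalIntegral.integral_interval_sub_left hg.intervalIntegrable hg.intervalIntegrable]
    simp [mul_comm]
  have hc : Continuous fun r => ∫ τ in (0:ℝ)..r, g τ :=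
    intervalIntegral.continuous_primitive (fun _ _ => hg.intervalIntegrable) 0
  refine ContinuousOn.congr ?_ h1
  refine ContinuousOn.mul (continuousOn_inv₀.mono fun r hr => (mem_Ioi.1 hr).ne') ?_
  exact ((hc.comp (continuous_const.mul continuous_id)).sub hc).continuousOn

/-- The average of a monotone function vanishing at `0+`, corrected by a linear term, is of
class `K`. -/
lemma isClassK_dyadicAvg (hg : Monotone g) (hg0 : Tendsto g (𝓝[≥] 0) (𝓝 0)) {c : ℝ} (hc : 0 < c) :
    IsClassK fun r => dyadicAvg g r + c * r := by
  have hg00 : g 0 = 0 := by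
    have h1 := hg0.mono_left (pure_le_nhdsWithin self_mem_Ici)
    have h2 : Tendsto g (pure 0) (pure (g 0)) := tendsto_pure_pure g 0
    exact tendsto_nhds_unique (h2.mono_right (pure_le_nhds _)) h1
  have h0 : dyadicAvg g 0 = 0 := by simp [dyadicAvg, hg00]
  have hcont : ContinuousOn (dyadicAvg g) (Ici 0) := by
    intro r hr
    rcases (mem_Ici.1 hr).eq_or_lt with rfl | hr
    · rw [ContinuousWithinAt, h0]
      have h2 : Tendsto (fun r : ℝ => g (2 * r)) (𝓝[≥] 0) (𝓝 0) := by
        refine hg0.comp (tendsto_nhdsWithin_iff.2 ⟨?_, ?_⟩)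
        · have : Tendsto (fun r : ℝ => 2 * r) (𝓝 0) (𝓝 (2 * 0)) :=
            (continuous_const.mul continuous_id).tendsto 0
          rw [mul_zero] at this
          exact this.mono_left nhdsWithin_le_nhds
        · filter_upwards [self_mem_nhdsWithin] with r hr
          simpa using hr
      refine tendsto_of_tendsto_of_tendsto_of_le_of_le' hg0 h2 ?_ ?_
      · filter_upwards [self_mem_nhdsWithin] with r hr using le_dyadicAvg hg hr
      · filter_upwards [self_mem_nhdsWithin] with r hr using dyadicAvg_le hg hr
    · exact ((continuousOn_dyadicAvg hg).continuousAt (Ioi_mem_nhds hr)).continuousWithinAt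
  refine ⟨hcont.add (continuous_const.mul continuous_id).continuousOn, ?_, by simp [h0]⟩
  intro a ha b hb hab
  have := dyadicAvg_monotoneOn hg ha hb hab.le
  have := mul_lt_mul_of_pos_left hab hc
  simp only
  linarith

end dyadicAvg

/-- A family of decaying quantities `(r, t, a)`, bounded by a class `K` function of `r` and with
uniform attraction to zero as `t → ∞`, is bounded by a class `KL` function. -/
lemma exists_isClassKL_bound (A : Set (ℝ × ℝ × ℝ)) {κ : ℝ → ℝ} (hκ : IsClassK κ)
    (hr : ∀ r t a, (r, t, a) ∈ A → 0 ≤ r)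
    (hA : ∀ r t a, (r, t, a) ∈ A → a ≤ κ r)
    (hT : ∀ R, 0 ≤ R → ∀ ε > 0, ∃ T, ∀ r t a, (r, t, a) ∈ A → r ≤ R → T ≤ t → a ≤ ε) :
    ∃ β, IsClassKL β ∧ ∀ r t a, (r, t, a) ∈ A → 0 ≤ t → a ≤ β r t := by
  let S : ℝ → ℝ → Set ℝ := fun r t => insert 0 {a | ∃ r' t', r' ≤ r ∧ t ≤ t' ∧ (r', t', a) ∈ A}
  have hSb : ∀ r t, BddAbove (S r t) := by
    intro r t
    refine ⟨κ |r|, ?_⟩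
    rintro a (rfl | ⟨r', t', h1, _, h3⟩)
    · exact hκ.nonneg (abs_nonneg r)
    · exact (hA _ _ _ h3).trans (hκ.mono (hr _ _ _ h3) (h1.trans (le_abs_self r)))
  have hSn : ∀ r t, (S r t).Nonempty := fun r t => ⟨0, mem_insert _ _⟩
  set ω : ℝ → ℝ → ℝ := fun r t => sSup (S r t) with hω
  have hω0 : ∀ r t, 0 ≤ ω r t := fun r t => le_csSup (hSb r t) (mem_insert _ _)
  have hωm : ∀ t, Monotone fun r => ω r t := by
    intro t r r' hrr
    refine csSup_le_csSup (hSb r' t) (hSn r t) ?_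
    rintro a (rfl | ⟨r1, t1, h1, h2, h3⟩)
    · exact mem_insert _ _
    · exact Or.inr ⟨r1, t1, h1.trans hrr, h2, h3⟩
  have hωa : ∀ r, Antitone fun t => ω r t := by
    intro r t t' htt
    refine csSup_le_csSup (hSb r t) (hSn r t') ?_
    rintro a (rfl | ⟨r1, t1, h1, h2, h3⟩)
    · exact mem_insert _ _
    · exact Or.inr ⟨r1, t1, h1, htt.trans h2, h3⟩
  have hωκ : ∀ r t, 0 ≤ r → ω r t ≤ κ r := by
    intro r t hr0
    refine csSup_le (hSn r t) ?_
    rintro a (rfl | ⟨r', t', h1, _, h3⟩)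
    · exact hκ.nonneg hr0
    · exact (hA _ _ _ h3).trans (hκ.mono (hr _ _ _ h3) h1)
  have hωt : ∀ r, 0 ≤ r → Tendsto (fun t => ω r t) atTop (𝓝 0) := by
    intro r hr0
    rw [Metric.tendsto_atTop]
    intro ε hε
    obtain ⟨T, hT⟩ := hT r hr0 (ε / 2) (by linarith)
    refine ⟨T, fun t ht => ?_⟩
    rw [Real.dist_eq, sub_zero, abs_of_nonneg (hω0 r t)]
    refine lt_of_le_of_lt (csSup_le (hSn r t) (a := ε / 2) ?_) (by linarith)
    rintro a (rfl | ⟨r', t', h1, h2, h3⟩)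
    · linarith
    · exact hT _ _ _ h3 h1 (ht.trans h2)
  have hlim0 : ∀ t, Tendsto (fun r => ω r t) (𝓝[≥] 0) (𝓝 0) := by
    intro t
    have hk : Tendsto κ (𝓝[≥] 0) (𝓝 0) := by
      have := hκ.1 0 self_mem_Ici
      rwa [ContinuousWithinAt, hκ.2.2] at this
    refine tendsto_of_tendsto_of_tendsto_of_le_of_le' tendsto_const_nhds hk ?_ ?_
    · exact Eventually.of_forall fun r => hω0 r t
    · filter_upwards [self_mem_nhdsWithin] with r hr using hωκ r t hr
  refine ⟨fun r t => dyadicAvg (fun r => ω r t) r + Real.exp (-t) * r, ⟨?_, ?_⟩, ?_⟩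
  · intro t _
    exact isClassK_dyadicAvg (hωm t) (hlim0 t) (Real.exp_pos _)
  · intro r hr0
    have hr0 : 0 ≤ r := hr0
    refine ⟨fun t _ t' _ htt => ?_, ?_⟩
    · refine add_le_add ?_ (mul_le_mul_of_nonneg_right (Real.exp_le_exp.2 (by linarith)) hr0)
      exact intervalIntegral.integral_mono_on (by norm_num)
        (intervalIntegrable_comp_mul (hωm t') hr0) (intervalIntegrable_comp_mul (hωm t) hr0)
        fun τ _ => hωa _ htt
    · have h1 : Tendsto (fun t => dyadicAvg (fun r => ω r t) r) atTop (𝓝 0) := by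
        refine tendsto_of_tendsto_of_tendsto_of_le_of_le tendsto_const_nhds
          (hωt (2 * r) (by linarith)) (fun t => ?_) fun t => dyadicAvg_le (hωm t) hr0
        exact (hω0 r t).trans (le_dyadicAvg (hωm t) hr0)
      have h2 : Tendsto (fun t => Real.exp (-t) * r) atTop (𝓝 0) := by
        simpa using (Real.tendsto_exp_neg_atTop_nhds_zero).mul_const r
      simpa using h1.add h2
  · intro r t a h _
    have hr0 := hr _ _ _ h
    have h1 : a ≤ ω r t := le_csSup (hSb r t) (Or.inr ⟨r, t, le_rfl, le_rfl, h⟩)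
    have h2 := le_dyadicAvg (hωm t) hr0
    have h3 : 0 ≤ Real.exp (-t) * r := mul_nonneg (Real.exp_pos _).le hr0
    simp only at h2 ⊢
    linarith

/-- A continuous map vanishing at the origin is dominated by a class `K` function of the norm. -/
lemma exists_isClassK_norm_bound {E F : Type*} [NormedAddCommGroup E] [ProperSpace E]
    [NormedAddCommGroup F] {h : E → F} (hc : Continuous h) (h0 : h 0 = 0) :
    ∃ κ, IsClassK κ ∧ ∀ ξ, ‖h ξ‖ ≤ κ ‖ξ‖ := by
  let S : ℝ → Set ℝ := fun r => insert 0 {a | ∃ ξ, ‖ξ‖ ≤ r ∧ ‖h ξ‖ = a}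
  have hSb : ∀ r, BddAbove (S r) := by
    intro r
    obtain ⟨C, hC⟩ := ((isCompact_closedBall (0 : E) r).image hc).isBounded.exists_norm_le
    refine ⟨max C 0, ?_⟩
    rintro a (rfl | ⟨ξ, h1, rfl⟩)
    · exact le_max_right _ _
    · exact (hC _ ⟨ξ, by simpa using h1, rfl⟩).trans (le_max_left _ _)
  have hSn : ∀ r, (S r).Nonempty := fun r => ⟨0, mem_insert _ _⟩
  have hm : Monotone fun r => sSup (S r) := by
    intro r r' hrr
    refine csSup_le_csSup (hSb r') (hSn r) ?_
    rintro a (rfl | ⟨ξ, h1, rfl⟩)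
    · exact mem_insert _ _
    · exact Or.inr ⟨ξ, h1.trans hrr, rfl⟩
  have hlim : Tendsto (fun r => sSup (S r)) (𝓝[≥] 0) (𝓝 0) := by
    rw [Metric.tendsto_nhdsWithin_nhds]
    intro ε hε
    obtain ⟨δ, hδ, h1⟩ := Metric.continuous_iff.1 hc 0 (ε / 2) (by linarith)
    refine ⟨δ, hδ, fun r hr hrd => ?_⟩
    rw [Real.dist_eq, sub_zero] at hrd ⊢
    rw [abs_of_nonneg (le_csSup (hSb r) (mem_insert _ _))]
    refine lt_of_le_of_lt (csSup_le (hSn r) (a := ε / 2) ?_) (by linarith)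
    rintro a (rfl | ⟨ξ, h2, rfl⟩)
    · linarith
    · have := h1 ξ (by rw [dist_zero_right]; exact h2.trans_lt ((le_abs_self r).trans_lt hrd))
      rw [h0, dist_zero_right] at this
      exact this.le
  refine ⟨_, isClassK_dyadicAvg hm hlim one_pos, fun ξ => ?_⟩
  have h1 : ‖h ξ‖ ≤ sSup (S ‖ξ‖) := le_csSup (hSb _) (Or.inr ⟨ξ, le_rfl, rfl⟩)
  have h2 := le_dyadicAvg hm (norm_nonneg ξ)
  have h3 := norm_nonneg ξ
  linarith

section inputs

variable {m : ℕ} {u : ℝ → EuclideanSpace ℝ (Fin m)}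

lemma uNorm_nonneg (u : ℝ → EuclideanSpace ℝ (Fin m)) : 0 ≤ uNorm u := ENNReal.toReal_nonneg

lemma BddInput.ae_norm_le (hu : BddInput u) :
    ∀ᵐ t ∂(volume.restrict (Ici (0:ℝ))), ‖u t‖ ≤ uNorm u := by
  filter_upwards [ENNReal.ae_le_essSup (μ := volume.restrict (Ici (0:ℝ)))
    (fun t => (‖u t‖₊ : ℝ≥0∞))] with t ht
  have := ENNReal.toReal_mono hu ht
  simpa [uNorm, uNormE] using this

lemma uNormE_le_of_ae {C : ℝ}
    (h : ∀ᵐ t ∂(volume.restrict (Ici (0:ℝ))), ‖u t‖ ≤ C) : uNormE u ≤ ENNReal.ofReal C := by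
  refine essSup_le_of_ae_le _ ?_
  filter_upwards [h] with t ht
  rw [← ENNReal.ofReal_coe_nnreal]
  exact ENNReal.ofReal_le_ofReal (by simpa using ht)

lemma bddInput_of_ae {C : ℝ}
    (h : ∀ᵐ t ∂(volume.restrict (Ici (0:ℝ))), ‖u t‖ ≤ C) : BddInput u :=
  ne_top_of_le_ne_top ENNReal.ofReal_ne_top (uNormE_le_of_ae h)

lemma uNorm_le_of_ae {C : ℝ} (hC : 0 ≤ C)
    (h : ∀ᵐ t ∂(volume.restrict (Ici (0:ℝ))), ‖u t‖ ≤ C) : uNorm u ≤ C := by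
  have := ENNReal.toReal_mono ENNReal.ofReal_ne_top (uNormE_le_of_ae h)
  rwa [ENNReal.toReal_ofReal hC] at this

lemma BddInput.isInput (hu : BddInput u) (hm : Measurable u) : IsInput u :=
  ⟨hm, fun _ _ => ⟨uNorm u, ae_restrict_of_ae_restrict_of_subset Icc_subset_Ici_self
    hu.ae_norm_le⟩⟩

lemma bddInput_const (μ : EuclideanSpace ℝ (Fin m)) : BddInput fun _ => μ :=
  bddInput_of_ae (Eventually.of_forall fun _ => le_rfl)

lemma uNorm_const_le (μ : EuclideanSpace ℝ (Fin m)) : uNorm (fun _ => μ) ≤ ‖μ‖ :=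
  uNorm_le_of_ae (norm_nonneg μ) (Eventually.of_forall fun _ => le_rfl)

lemma isInput_const (μ : EuclideanSpace ℝ (Fin m)) : IsInput fun _ => μ :=
  (bddInput_const μ).isInput measurable_const

/-- The input equal to `μ` on `(-∞,τ]`, followed by `v`. -/
def prependConst (τ : ℝ) (μ : EuclideanSpace ℝ (Fin m)) (v : ℝ → EuclideanSpace ℝ (Fin m)) :
    ℝ → EuclideanSpace ℝ (Fin m) := fun t => if t ≤ τ then μ else v (t - τ)

variable {τ : ℝ} {μ : EuclideanSpace ℝ (Fin m)}

lemma measurable_prependConst (hu : Measurable u) : Measurable (prependConst τ μ u) :=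
  Measurable.ite measurableSet_Iic measurable_const (hu.comp (measurable_id.sub_const τ))

lemma ae_norm_prependConst_le (hu : BddInput u) :
    ∀ᵐ t ∂(volume.restrict (Ici (0:ℝ))), ‖prependConst τ μ u t‖ ≤ max ‖μ‖ (uNorm u) := by
  refine ae_restrict_of_ae ?_
  have h1 := (ae_restrict_iff' measurableSet_Ici).1 hu.ae_norm_le
  have h2 : ∀ᵐ t ∂(volume : Measure ℝ), t - τ ∈ Ici 0 → ‖u (t - τ)‖ ≤ uNorm u :=
    (measurePreserving_sub_right volume τ).quasiMeasurePreserving.ae h1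
  filter_upwards [h2] with t ht
  unfold prependConst
  split_ifs with h
  · exact le_max_left _ _
  · exact (ht (by simpa using (not_le.1 h).le)).trans (le_max_right _ _)

lemma bddInput_prependConst (hu : BddInput u) : BddInput (prependConst τ μ u) :=
  bddInput_of_ae (ae_norm_prependConst_le hu)

lemma uNorm_prependConst_le (hu : BddInput u) :
    uNorm (prependConst τ μ u) ≤ max ‖μ‖ (uNorm u) :=
  uNorm_le_of_ae (le_max_of_le_left (norm_nonneg μ)) (ae_norm_prependConst_le hu)

end inputs

/-- Integral form of Grönwall's inequality. -/
lemma le_mul_exp_of_le_add_integral {g : ℝ → ℝ} {a L T : ℝ} (hL : 0 ≤ L)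
    (hg : ContinuousOn g (Icc 0 T))
    (h : ∀ t ∈ Icc 0 T, g t ≤ a + L * ∫ s in (0:ℝ)..t, g s) :
    ∀ t ∈ Icc 0 T, g t ≤ a * Real.exp (L * t) := by
  intro t ht
  have hT : (0:ℝ) ≤ T := ht.1.trans ht.2
  have hi : ∀ t ∈ Icc 0 T, IntervalIntegrable g volume 0 t := fun t ht =>
    (hg.mono (by rw [uIcc_of_le ht.1]; exact Icc_subset_Icc_right ht.2)).intervalIntegrable
  have hcont : ContinuousOn (fun t => a + L * ∫ s in (0:ℝ)..t, g s) (Icc 0 T) := by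
    refine continuousOn_const.add (continuousOn_const.mul ?_)
    have := intervalIntegral.continuousOn_primitive_interval (μ := volume) (f := g) (a := 0)
      (b := T) (by rw [uIcc_of_le hT]; exact hg.integrableOn_Icc)
    rwa [uIcc_of_le hT] at this
  have key := le_gronwallBound_of_liminf_deriv_right_le (f := fun t => a + L * ∫ s in (0:ℝ)..t, g s)
    (f' := fun t => L * g t) (δ := a) (K := L) (ε := 0) (a := 0) (b := T) hcont ?_ (by simp) ?_ t ht
  · rw [gronwallBound_ε0, sub_zero] at key
    exact (h t ht).trans key
  · intro s hs r hr
    have hd : HasDerivWithinAt (fun t => ∫ s in (0:ℝ)..t, g s) (g s) (Ici s) s := by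
      refine intervalIntegral.integral_hasDerivWithinAt_right (hi s ⟨hs.1, hs.2.le⟩) ?_ ?_
        (t := Ioi s)
      · have : Icc 0 T ∈ 𝓝[>] s := mem_of_superset (Ioo_mem_nhdsGT hs.2) fun y hy =>
          ⟨hs.1.trans hy.1.le, hy.2.le⟩
        exact ⟨Icc 0 T, this, hg.aestronglyMeasurable measurableSet_Icc⟩
      · exact ((hg s ⟨hs.1, hs.2.le⟩).mono_of_mem_nhdsWithin
          (mem_of_superset (Ioo_mem_nhdsGT hs.2) fun y hy => ⟨hs.1.trans hy.1.le, hy.2.le⟩))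
    have hd' := (hd.const_mul L).const_add a
    exact (hd'.liminf_right_slope_le hr).mono fun z hz => by
      simpa [slope_def_field, div_eq_inv_mul] using hz
  · intro s hs
    simpa using mul_le_mul_of_nonneg_left (h s ⟨hs.1, hs.2.le⟩) hL

section trajectories

variable {n m : ℕ}
  {f : EuclideanSpace ℝ (Fin n) → EuclideanSpace ℝ (Fin m) → EuclideanSpace ℝ (Fin n)}
  {x : ℝ → EuclideanSpace ℝ (Fin n) → (ℝ → EuclideanSpace ℝ (Fin m)) →
      EuclideanSpace ℝ (Fin n)}

lemma exists_norm_le_of_locallyLipschitz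
    (hf : LocallyLipschitz fun q : EuclideanSpace ℝ (Fin n) × EuclideanSpace ℝ (Fin m) =>
      f q.1 q.2) (R U : ℝ) :
    ∃ F, 0 ≤ F ∧ ∀ ξ μ, ‖ξ‖ ≤ R → ‖μ‖ ≤ U → ‖f ξ μ‖ ≤ F := by
  obtain ⟨C, hC⟩ := (((isCompact_closedBall (0 : EuclideanSpace ℝ (Fin n)) R).prod
    (isCompact_closedBall (0 : EuclideanSpace ℝ (Fin m)) U)).image
      hf.continuous).isBounded.exists_norm_le
  refine ⟨max C 0, le_max_right _ _, fun ξ μ hξ hμ => (hC _ ⟨(ξ, μ), ?_, rfl⟩).trans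
    (le_max_left _ _)⟩
  simpa using ⟨hξ, hμ⟩

lemma exists_lipschitz_of_locallyLipschitz
    (hf : LocallyLipschitz fun q : EuclideanSpace ℝ (Fin n) × EuclideanSpace ℝ (Fin m) =>
      f q.1 q.2) (R U : ℝ) :
    ∃ L, 0 ≤ L ∧ ∀ ξ ξ' μ, ‖ξ‖ ≤ R → ‖ξ'‖ ≤ R → ‖μ‖ ≤ U → ‖f ξ μ - f ξ' μ‖ ≤ L * ‖ξ - ξ'‖ := by
  obtain ⟨K, hK⟩ := LocallyLipschitzOn.exists_lipschitzOnWith_of_compact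
    ((isCompact_closedBall (0 : EuclideanSpace ℝ (Fin n)) R).prod
    (isCompact_closedBall (0 : EuclideanSpace ℝ (Fin m)) U)) hf.locallyLipschitzOn
  refine ⟨K, K.2, fun ξ ξ' μ hξ hξ' hμ => ?_⟩
  have := hK.dist_le_mul (ξ, μ) (by simpa using ⟨hξ, hμ⟩) (ξ', μ) (by simpa using ⟨hξ', hμ⟩)
  simpa [dist_eq_norm, Prod.norm_def] using this

lemma integrableOn_of_bounded_state
    (hf : LocallyLipschitz fun q : EuclideanSpace ℝ (Fin n) × EuclideanSpace ℝ (Fin m) =>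
      f q.1 q.2) {u : ℝ → EuclideanSpace ℝ (Fin m)} (hu : IsInput u) (hb : BddInput u)
    {z : ℝ → EuclideanSpace ℝ (Fin n)} {R T : ℝ} (hz : ∀ t, 0 ≤ t → ‖z t‖ ≤ R)
    (hzm : AEStronglyMeasurable z (volume.restrict (Ici 0))) :
    IntegrableOn (fun s => f (z s) (u s)) (Icc 0 T) := by
  obtain ⟨F, -, hF⟩ := exists_norm_le_of_locallyLipschitz hf R (uNorm u)
  refine Integrable.of_bound ?_ F ?_
  · exact (hf.continuous.comp_aestronglyMeasurable
      (hzm.prodMk hu.1.aestronglyMeasurable)).mono_measure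
      (Measure.restrict_mono Icc_subset_Ici_self le_rfl)
  · have := ae_restrict_of_ae_restrict_of_subset
      (Icc_subset_Ici_self : Icc 0 T ⊆ Ici 0) hb.ae_norm_le
    filter_upwards [this, ae_restrict_mem measurableSet_Icc] with t h1 h2
    exact hF _ _ (hz t h2.1) h1

lemma continuousOn_Icc_of_intervalIntegrable (hS : IsSolutionMap f x)
    {ξ : EuclideanSpace ℝ (Fin n)} {u : ℝ → EuclideanSpace ℝ (Fin m)} (hu : IsInput u) {T : ℝ}
    (hT : 0 ≤ T) (hi : IntervalIntegrable (fun s => f (x s ξ u) (u s)) volume 0 T) :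
    ContinuousOn (fun t => x t ξ u) (Icc 0 T) := by
  have := intervalIntegral.continuousOn_primitive_interval (μ := volume)
    (f := fun s => f (x s ξ u) (u s)) (a := 0) (b := T)
    (by rw [uIcc_of_le hT]; exact (intervalIntegrable_iff_integrableOn_Icc_of_le hT).1 hi)
  rw [uIcc_of_le hT] at this
  exact (continuousOn_const.add this).congr fun t ht => hS ξ u hu t ht.1

lemma IsBIBS.exists_bound (hB : IsBIBS f x) (R U : ℝ) :
    ∃ R', R ≤ R' ∧ ∀ ξ u, IsInput u → BddInput u → ‖ξ‖ ≤ R → uNorm u ≤ U →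
      ∀ t, 0 ≤ t → ‖x t ξ u‖ ≤ R' := by
  obtain ⟨_, σ, hσ, h⟩ := hB
  refine ⟨max R (max (σ |R|) (σ |U|)), le_max_left _ _, fun ξ u hu hb hξ hU t ht => ?_⟩
  refine (h ξ u hu hb t ht).trans (le_max_of_le_right ?_)
  exact max_le_max (hσ.mono (norm_nonneg _) (hξ.trans (le_abs_self R)))
    (hσ.mono (uNorm_nonneg _) (hU.trans (le_abs_self U)))

/-- Trajectories of a BIBS system with bounded inputs are genuine Carathéodory solutions. -/
lemma IsBIBS.integrableOn (hB : IsBIBS f x)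
    (hf : LocallyLipschitz fun q : EuclideanSpace ℝ (Fin n) × EuclideanSpace ℝ (Fin m) =>
      f q.1 q.2) {u : ℝ → EuclideanSpace ℝ (Fin m)} (hu : IsInput u) (hb : BddInput u)
    (ξ : EuclideanSpace ℝ (Fin n)) (T : ℝ) :
    IntegrableOn (fun s => f (x s ξ u) (u s)) (Icc 0 T) := by
  obtain ⟨R, -, hR⟩ := hB.exists_bound ‖ξ‖ (uNorm u)
  refine integrableOn_of_bounded_state hf hu hb (hR ξ u hu hb le_rfl le_rfl) ?_
  set F := fun s => f (x s ξ u) (u s) with hF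
  by_cases hall : ∀ t, 0 ≤ t → IntervalIntegrable F volume 0 t
  · refine ContinuousOn.aestronglyMeasurable (fun t ht => ?_) measurableSet_Ici
    have ht : 0 ≤ t := ht
    have h1 := continuousOn_Icc_of_intervalIntegrable hB.1 hu (by linarith) (hall (t + 1) (by linarith))
    refine (h1 t ⟨ht, by linarith⟩).mono_of_mem_nhdsWithin ?_
    filter_upwards [self_mem_nhdsWithin, nhdsWithin_le_nhds (Iio_mem_nhds (lt_add_one t))]
      with s hs hs' using ⟨hs, hs'.le⟩
  · push Not at hall
    obtain ⟨T₀, hT₀, hT₀'⟩ := hall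
    set S := {t | 0 ≤ t ∧ IntervalIntegrable F volume 0 t} with hSdef
    have hSb : BddAbove S := by
      refine ⟨T₀, fun t ht => ?_⟩
      by_contra! hlt
      refine hT₀' (ht.2.mono_set ?_)
      rw [uIcc_of_le hT₀, uIcc_of_le ht.1]
      exact Icc_subset_Icc_right hlt.le
    have hS0 : (0:ℝ) ∈ S := ⟨le_rfl, IntervalIntegrable.refl⟩
    set T' := sSup S with hT'
    have h1 : AEStronglyMeasurable (fun t => x t ξ u) (volume.restrict (Ico 0 T')) := by
      refine ContinuousOn.aestronglyMeasurable (fun t ht => ?_) measurableSet_Ico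
      obtain ⟨t', ht', htt⟩ := exists_lt_of_lt_csSup ⟨0, hS0⟩ ht.2
      have h1 := continuousOn_Icc_of_intervalIntegrable hB.1 hu ht'.1 ht'.2
      refine (h1 t ⟨ht.1, htt.le⟩).mono_of_mem_nhdsWithin ?_
      filter_upwards [self_mem_nhdsWithin, nhdsWithin_le_nhds (Iio_mem_nhds htt)]
        with s hs hs' using ⟨hs.1, hs'.le⟩
    have h2 : AEStronglyMeasurable (fun t => x t ξ u) (volume.restrict (Ioi T')) := by
      refine AEStronglyMeasurable.congr (f := fun _ => ξ) aestronglyMeasurable_const ?_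
      filter_upwards [ae_restrict_mem measurableSet_Ioi] with t ht
      have ht : T' < t := ht
      have ht0 : 0 ≤ t := (le_csSup hSb hS0).trans ht.le
      rw [hB.1 ξ u hu t ht0, intervalIntegral.integral_undef, add_zero]
      intro hcon
      exact absurd (le_csSup hSb ⟨ht0, hcon⟩) (not_le.2 ht)
    have h3 : AEStronglyMeasurable (fun t => x t ξ u) (volume.restrict {T'}) := by
      simp
    have h4 := aestronglyMeasurable_union_iff.2 ⟨aestronglyMeasurable_union_iff.2 ⟨h1, h3⟩, h2⟩
    refine h4.mono_measure (Measure.restrict_mono ?_ le_rfl)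
    intro t ht
    rcases lt_trichotomy t T' with h | h | h
    · exact Or.inl (Or.inl ⟨ht, h⟩)
    · exact Or.inl (Or.inr h)
    · exact Or.inr h

lemma IsBIBS.intervalIntegrable (hB : IsBIBS f x)
    (hf : LocallyLipschitz fun q : EuclideanSpace ℝ (Fin n) × EuclideanSpace ℝ (Fin m) =>
      f q.1 q.2) {u : ℝ → EuclideanSpace ℝ (Fin m)} (hu : IsInput u) (hb : BddInput u)
    (ξ : EuclideanSpace ℝ (Fin n)) {a b : ℝ} (ha : 0 ≤ a) (hb' : 0 ≤ b) :
    IntervalIntegrable (fun s => f (x s ξ u) (u s)) volume a b := by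
  have key : ∀ T, 0 ≤ T → IntervalIntegrable (fun s => f (x s ξ u) (u s)) volume 0 T :=
    fun T hT => (intervalIntegrable_iff_integrableOn_Icc_of_le hT).2 (hB.integrableOn hf hu hb ξ T)
  exact (key a ha).symm.trans (key b hb')

lemma IsBIBS.continuousOn (hB : IsBIBS f x)
    (hf : LocallyLipschitz fun q : EuclideanSpace ℝ (Fin n) × EuclideanSpace ℝ (Fin m) =>
      f q.1 q.2) {u : ℝ → EuclideanSpace ℝ (Fin m)} (hu : IsInput u) (hb : BddInput u)
    (ξ : EuclideanSpace ℝ (Fin n)) : ContinuousOn (fun t => x t ξ u) (Ici 0) := by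
  intro t ht
  have ht : 0 ≤ t := ht
  have h1 := continuousOn_Icc_of_intervalIntegrable hB.1 hu (by linarith)
    (hB.intervalIntegrable hf hu hb ξ le_rfl (by linarith : 0 ≤ t + 1))
  refine (h1 t ⟨ht, by linarith⟩).mono_of_mem_nhdsWithin ?_
  filter_upwards [self_mem_nhdsWithin, nhdsWithin_le_nhds (Iio_mem_nhds (lt_add_one t))]
    with s hs hs' using ⟨hs, hs'.le⟩

lemma IsBIBS.sub_eq_integral (hB : IsBIBS f x)
    (hf : LocallyLipschitz fun q : EuclideanSpace ℝ (Fin n) × EuclideanSpace ℝ (Fin m) =>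
      f q.1 q.2) {u : ℝ → EuclideanSpace ℝ (Fin m)} (hu : IsInput u) (hb : BddInput u)
    (ξ : EuclideanSpace ℝ (Fin n)) {a b : ℝ} (ha : 0 ≤ a) (hb' : 0 ≤ b) :
    x b ξ u - x a ξ u = ∫ s in a..b, f (x s ξ u) (u s) := by
  rw [hB.1 ξ u hu b hb', hB.1 ξ u hu a ha, add_sub_add_left_eq_sub]
  exact intervalIntegral.integral_interval_sub_left (hB.intervalIntegrable hf hu hb ξ le_rfl hb')
    (hB.intervalIntegrable hf hu hb ξ le_rfl ha)

lemma IsSolutionMap.zero (hS : IsSolutionMap f x) {u : ℝ → EuclideanSpace ℝ (Fin m)}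
    (hu : IsInput u) (ξ : EuclideanSpace ℝ (Fin n)) : x 0 ξ u = ξ := by
  simpa using hS ξ u hu 0 self_mem_Ici

/-- Two bounded solutions of the same Carathéodory equation diverge at most exponentially. -/
lemma norm_sub_le_of_integral_eq {z z' : ℝ → EuclideanSpace ℝ (Fin n)}
    {ξ ξ' : EuclideanSpace ℝ (Fin n)} {u : ℝ → EuclideanSpace ℝ (Fin m)} {R U L T : ℝ}
    (hL : 0 ≤ L)
    (hLip : ∀ ξ ξ' μ, ‖ξ‖ ≤ R → ‖ξ'‖ ≤ R → ‖μ‖ ≤ U → ‖f ξ μ - f ξ' μ‖ ≤ L * ‖ξ - ξ'‖)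
    (hu : ∀ᵐ t ∂(volume.restrict (Icc 0 T)), ‖u t‖ ≤ U)
    (hz : ContinuousOn z (Icc 0 T)) (hz' : ContinuousOn z' (Icc 0 T))
    (hzR : ∀ t ∈ Icc 0 T, ‖z t‖ ≤ R) (hzR' : ∀ t ∈ Icc 0 T, ‖z' t‖ ≤ R)
    (hi : IntegrableOn (fun s => f (z s) (u s)) (Icc 0 T))
    (hi' : IntegrableOn (fun s => f (z' s) (u s)) (Icc 0 T))
    (he : ∀ t ∈ Icc 0 T, z t = ξ + ∫ s in (0:ℝ)..t, f (z s) (u s))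
    (he' : ∀ t ∈ Icc 0 T, z' t = ξ' + ∫ s in (0:ℝ)..t, f (z' s) (u s)) :
    ∀ t ∈ Icc 0 T, ‖z t - z' t‖ ≤ ‖ξ - ξ'‖ * Real.exp (L * t) := by
  refine le_mul_exp_of_le_add_integral hL (hz.sub hz').norm fun t ht => ?_
  have hi1 : IntervalIntegrable (fun s => f (z s) (u s)) volume 0 t :=
    (intervalIntegrable_iff_integrableOn_Icc_of_le ht.1).2 (hi.mono_set (Icc_subset_Icc_right ht.2))
  have hi2 : IntervalIntegrable (fun s => f (z' s) (u s)) volume 0 t :=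
    (intervalIntegrable_iff_integrableOn_Icc_of_le ht.1).2 (hi'.mono_set (Icc_subset_Icc_right ht.2))
  have e : z t - z' t = (ξ - ξ') + ∫ s in (0:ℝ)..t, (f (z s) (u s) - f (z' s) (u s)) := by
    rw [he t ht, he' t ht, intervalIntegral.integral_sub hi1 hi2]
    abel
  rw [e]
  refine (norm_add_le _ _).trans (add_le_add le_rfl ?_)
  rw [← intervalIntegral.integral_const_mul]
  refine intervalIntegral.norm_integral_le_of_norm_le ht.1 ?_ ?_
  · have h1 := (ae_restrict_iff' measurableSet_Icc).1 hu
    filter_upwards [h1] with s hs hst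
    have hsT : s ∈ Icc 0 T := ⟨hst.1.le, hst.2.trans ht.2⟩
    exact hLip _ _ _ (hzR s hsT) (hzR' s hsT) (hs hsT)
  · refine ContinuousOn.intervalIntegrable ?_
    rw [uIcc_of_le ht.1]
    exact continuousOn_const.mul ((hz.sub hz').norm.mono (Icc_subset_Icc_right ht.2))

/-- Lipschitz dependence on the initial state, uniformly over bounded inputs and times. -/
lemma IsBIBS.exists_lipschitz_flow (hB : IsBIBS f x)
    (hf : LocallyLipschitz fun q : EuclideanSpace ℝ (Fin n) × EuclideanSpace ℝ (Fin m) =>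
      f q.1 q.2) (R U T : ℝ) :
    ∃ C, 0 ≤ C ∧ ∀ ξ ξ' u, IsInput u → BddInput u → ‖ξ‖ ≤ R → ‖ξ'‖ ≤ R → uNorm u ≤ U →
      ∀ t, 0 ≤ t → t ≤ T → ‖x t ξ u - x t ξ' u‖ ≤ C * ‖ξ - ξ'‖ := by
  obtain ⟨R', -, hR'⟩ := hB.exists_bound R U
  obtain ⟨L, hL, hLip⟩ := exists_lipschitz_of_locallyLipschitz hf R' U
  refine ⟨Real.exp (L * T), (Real.exp_pos _).le, fun ξ ξ' u hu hb hξ hξ' hU t ht htT => ?_⟩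
  have hsub : Icc 0 T ⊆ Ici (0:ℝ) := Icc_subset_Ici_self
  have h := norm_sub_le_of_integral_eq (T := T) (u := u) hL hLip
    ((ae_restrict_of_ae_restrict_of_subset hsub hb.ae_norm_le).mono fun t h => h.trans hU)
    ((hB.continuousOn hf hu hb ξ).mono hsub) ((hB.continuousOn hf hu hb ξ').mono hsub)
    (fun t ht => hR' ξ u hu hb hξ hU t ht.1) (fun t ht => hR' ξ' u hu hb hξ' hU t ht.1)
    (hB.integrableOn hf hu hb ξ T) (hB.integrableOn hf hu hb ξ' T)
    (fun t ht => hB.1 ξ u hu t ht.1) (fun t ht => hB.1 ξ' u hu t ht.1) t ⟨ht, htT⟩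
  refine h.trans ?_
  rw [mul_comm]
  exact mul_le_mul_of_nonneg_right
    (Real.exp_le_exp.2 (mul_le_mul_of_nonneg_left htT hL)) (norm_nonneg _)

end trajectories

section concatenation

variable {n m : ℕ}
  {f : EuclideanSpace ℝ (Fin n) → EuclideanSpace ℝ (Fin m) → EuclideanSpace ℝ (Fin n)}
  {x : ℝ → EuclideanSpace ℝ (Fin n) → (ℝ → EuclideanSpace ℝ (Fin m)) →
      EuclideanSpace ℝ (Fin n)}

/-- A bounded continuous solution of the integral equation coincides with the solution map. -/
lemma IsBIBS.eq_of_integral_eq (hB : IsBIBS f x)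
    (hf : LocallyLipschitz fun q : EuclideanSpace ℝ (Fin n) × EuclideanSpace ℝ (Fin m) =>
      f q.1 q.2) {u : ℝ → EuclideanSpace ℝ (Fin m)} (hu : IsInput u) (hb : BddInput u)
    {ξ : EuclideanSpace ℝ (Fin n)} {z : ℝ → EuclideanSpace ℝ (Fin n)} {T : ℝ}
    (hz : ContinuousOn z (Icc 0 T)) (hi : IntegrableOn (fun s => f (z s) (u s)) (Icc 0 T))
    (he : ∀ t ∈ Icc 0 T, z t = ξ + ∫ s in (0:ℝ)..t, f (z s) (u s)) {t : ℝ} (ht : t ∈ Icc 0 T) :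
    z t = x t ξ u := by
  obtain ⟨R₁, hR₁⟩ := (isCompact_Icc.image_of_continuousOn hz).isBounded.exists_norm_le
  obtain ⟨R₂, -, hR₂⟩ := hB.exists_bound ‖ξ‖ (uNorm u)
  obtain ⟨L, hL, hLip⟩ := exists_lipschitz_of_locallyLipschitz hf (max R₁ R₂) (uNorm u)
  have hsub : Icc 0 T ⊆ Ici (0:ℝ) := Icc_subset_Ici_self
  have h := norm_sub_le_of_integral_eq (T := T) (u := u) hL hLip
    (ae_restrict_of_ae_restrict_of_subset hsub hb.ae_norm_le)
    hz ((hB.continuousOn hf hu hb ξ).mono hsub)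
    (fun t ht => (hR₁ _ ⟨t, ht, rfl⟩).trans (le_max_left _ _))
    (fun t ht => (hR₂ ξ u hu hb le_rfl le_rfl t ht.1).trans (le_max_right _ _))
    hi (hB.integrableOn hf hu hb ξ T) he (fun t ht => hB.1 ξ u hu t ht.1) t ht
  rw [sub_self, norm_zero, zero_mul] at h
  exact sub_eq_zero.1 (norm_le_zero_iff.1 h)

lemma IsBIBS.prependConst_eq (hB : IsBIBS f x)
    (hf : LocallyLipschitz fun q : EuclideanSpace ℝ (Fin n) × EuclideanSpace ℝ (Fin m) =>
      f q.1 q.2) {v : ℝ → EuclideanSpace ℝ (Fin m)} (hv : IsInput v) (hb : BddInput v)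
    (ξ : EuclideanSpace ℝ (Fin n)) (μ : EuclideanSpace ℝ (Fin m)) {τ : ℝ} (hτ : 0 ≤ τ) :
    x τ ξ (prependConst τ μ v) = x τ ξ fun _ => μ := by
  have hw := (bddInput_prependConst (τ := τ) (μ := μ) hb).isInput (measurable_prependConst hv.1)
  have hwb := bddInput_prependConst (τ := τ) (μ := μ) hb
  have heq : ∀ t ∈ Icc 0 τ, (fun s => f (x s ξ (prependConst τ μ v)) (prependConst τ μ v s)) t =
      (fun s => f (x s ξ (prependConst τ μ v)) μ) t := fun t ht => by
    simp [prependConst, ht.2]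
  refine hB.eq_of_integral_eq hf (isInput_const μ) (bddInput_const μ) (T := τ)
    ((hB.continuousOn hf hw hwb ξ).mono Icc_subset_Ici_self) ?_ (fun t ht => ?_) ⟨hτ, le_rfl⟩
  · exact (hB.integrableOn hf hw hwb ξ τ).congr_fun heq measurableSet_Icc
  · rw [hB.1 ξ _ hw t ht.1]
    congr 1
    refine intervalIntegral.integral_congr fun s hs => heq s ?_
    rw [uIcc_of_le ht.1] at hs
    exact ⟨hs.1, hs.2.trans ht.2⟩

/-- Flow property for a constant input followed by an arbitrary bounded input. -/
lemma IsBIBS.flow_prependConst (hB : IsBIBS f x)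
    (hf : LocallyLipschitz fun q : EuclideanSpace ℝ (Fin n) × EuclideanSpace ℝ (Fin m) =>
      f q.1 q.2) {v : ℝ → EuclideanSpace ℝ (Fin m)} (hv : IsInput v) (hb : BddInput v)
    (ξ : EuclideanSpace ℝ (Fin n)) (μ : EuclideanSpace ℝ (Fin m)) {τ s : ℝ} (hτ : 0 ≤ τ)
    (hs : 0 ≤ s) :
    x (τ + s) ξ (prependConst τ μ v) = x s (x τ ξ fun _ => μ) v := by
  have hw := (bddInput_prependConst (τ := τ) (μ := μ) hb).isInput (measurable_prependConst hv.1)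
  have hwb := bddInput_prependConst (τ := τ) (μ := μ) hb
  rw [← hB.prependConst_eq hf hv hb ξ μ hτ]
  have hae : ∀ t, 0 < t → (fun s => f (x (τ + s) ξ (prependConst τ μ v)) (v s)) t =
      (fun s => f (x (τ + s) ξ (prependConst τ μ v)) (prependConst τ μ v (τ + s))) t := by
    intro t ht
    simp [prependConst, not_le.2 ht]
  have hshift : ∀ t, 0 ≤ t →
      IntervalIntegrable (fun s => f (x (τ + s) ξ (prependConst τ μ v)) (v s)) volume 0 t := by
    intro t ht
    have h1 := (hB.intervalIntegrable hf hw hwb ξ hτ (add_nonneg hτ ht)).comp_add_left τ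
    rw [sub_self, add_sub_cancel_left] at h1
    refine h1.congr ?_
    intro t' ht'
    rw [uIoc_of_le ht] at ht'
    exact (hae t' ht'.1).symm
  refine hB.eq_of_integral_eq hf hv hb (T := s)
    (z := fun t => x (τ + t) ξ (prependConst τ μ v)) ?_ ?_ (fun t ht => ?_) ⟨hs, le_rfl⟩
  · refine (hB.continuousOn hf hw hwb ξ).comp (continuous_const.add continuous_id).continuousOn ?_
    intro t ht
    exact add_nonneg hτ ht.1
  · exact (intervalIntegrable_iff_integrableOn_Icc_of_le hs).1 (hshift s hs)
  · rw [← sub_eq_iff_eq_add', hB.sub_eq_integral hf hw hwb ξ hτ (add_nonneg hτ ht.1)]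
    have h2 := intervalIntegral.integral_comp_add_left
      (fun s => f (x s ξ (prependConst τ μ v)) (prependConst τ μ v s)) τ (a := 0) (b := t)
    rw [add_zero] at h2
    rw [← h2]
    refine intervalIntegral.integral_congr_ae (Eventually.of_forall fun t' ht' => ?_)
    rw [uIoc_of_le ht.1] at ht'
    exact (hae t' ht'.1).symm

/-- First-order expansion of the flow under constant inputs. -/
lemma IsBIBS.exists_euler_bound (hB : IsBIBS f x)
    (hf : LocallyLipschitz fun q : EuclideanSpace ℝ (Fin n) × EuclideanSpace ℝ (Fin m) =>
      f q.1 q.2) (R U : ℝ) :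
    ∃ C, 0 ≤ C ∧ ∀ η μ, ‖η‖ ≤ R → ‖μ‖ ≤ U → ∀ t, 0 ≤ t →
      ‖x t η (fun _ => μ) - (η + t • f η μ)‖ ≤ C * t ^ 2 := by
  obtain ⟨R', hRR', hR'⟩ := hB.exists_bound R U
  obtain ⟨L, hL, hLip⟩ := exists_lipschitz_of_locallyLipschitz hf R' U
  obtain ⟨F, hF, hFb⟩ := exists_norm_le_of_locallyLipschitz hf R' U
  refine ⟨L * F, mul_nonneg hL hF, fun η μ hη hμ t ht => ?_⟩
  have hu := isInput_const μ
  have hb := bddInput_const μ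
  have hxb : ∀ s, 0 ≤ s → ‖x s η (fun _ => μ)‖ ≤ R' := fun s hs =>
    hR' η _ hu hb hη ((uNorm_const_le μ).trans hμ) s hs
  have h1 : ∀ s, 0 ≤ s → ‖x s η (fun _ => μ) - η‖ ≤ F * s := by
    intro s hs
    have e := hB.sub_eq_integral hf hu hb η le_rfl hs
    rw [hB.1.zero hu] at e
    rw [e]
    have := intervalIntegral.norm_integral_le_of_norm_le_const (a := 0) (b := s) (C := F)
      (f := fun s => f (x s η fun _ => μ) μ) fun r hr => by
        rw [uIoc_of_le hs] at hr
        exact hFb _ _ (hxb r hr.1.le) hμ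
    simpa [abs_of_nonneg hs] using this
  have e : x t η (fun _ => μ) - (η + t • f η μ) =
      ∫ s in (0:ℝ)..t, (f (x s η fun _ => μ) μ - f η μ) := by
    rw [intervalIntegral.integral_sub (hB.intervalIntegrable hf hu hb η le_rfl ht) (by simp),
      ← hB.sub_eq_integral hf hu hb η le_rfl ht, hB.1.zero hu]
    simp [sub_sub]
  rw [e]
  have := intervalIntegral.norm_integral_le_of_norm_le_const (a := 0) (b := t) (C := L * (F * t))
    (f := fun s => f (x s η fun _ => μ) μ - f η μ) fun r hr => by
      rw [uIoc_of_le ht] at hr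
      refine (hLip _ _ _ (hxb r hr.1.le) (hη.trans hRR') hμ).trans ?_
      refine mul_le_mul_of_nonneg_left ((h1 r hr.1.le).trans ?_) hL
      exact mul_le_mul_of_nonneg_left hr.2 hF
  rw [sub_zero, abs_of_nonneg ht] at this
  linarith [this, (by ring : L * (F * t) * t = L * F * t ^ 2)]

end concatenation

section Sufficiency

variable {n m p : ℕ}
  {f : EuclideanSpace ℝ (Fin n) → EuclideanSpace ℝ (Fin m) → EuclideanSpace ℝ (Fin n)}
  {h : EuclideanSpace ℝ (Fin n) → EuclideanSpace ℝ (Fin p)}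
  {x : ℝ → EuclideanSpace ℝ (Fin n) → (ℝ → EuclideanSpace ℝ (Fin m)) → EuclideanSpace ℝ (Fin n)}
  {V : EuclideanSpace ℝ (Fin n) → ℝ}

/-- A differential inequality for `V` along the vector field integrates along a trajectory. -/
lemma IsBIBS.lyapunov_le_sub_mul (hB : IsBIBS f x)
    (hf : LocallyLipschitz fun q : EuclideanSpace ℝ (Fin n) × EuclideanSpace ℝ (Fin m) =>
      f q.1 q.2) (hV : ContDiff ℝ 1 V) {u : ℝ → EuclideanSpace ℝ (Fin m)} (hu : IsInput u)
    (hb : BddInput u) (ξ : EuclideanSpace ℝ (Fin n)) {a b c : ℝ} (ha : 0 ≤ a) (hab : a ≤ b)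
    (hd : ∀ s ∈ Icc a b, ∀ μ, ‖μ‖ ≤ uNorm u →
      fderiv ℝ V (x s ξ u) (f (x s ξ u) μ) ≤ -c) :
    V (x b ξ u) ≤ V (x a ξ u) - c * (b - a) := by
  have hcont : ContinuousOn (fun t => x t ξ u) (Ici 0) := hB.continuousOn hf hu hb ξ
  have hsub : Icc a b ⊆ Ici 0 := fun t ht => ha.trans ht.1
  obtain ⟨R, -, hR⟩ := hB.exists_bound ‖ξ‖ (uNorm u)
  obtain ⟨F, hF0, hF⟩ := exists_norm_le_of_locallyLipschitz hf R (uNorm u)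
  refine image_le_of_liminf_slope_right_le_deriv_boundary (f := fun t => V (x t ξ u))
    (B := fun t => V (x a ξ u) - c * (t - a)) (B' := fun _ => -c)
    (hV.continuous.comp_continuousOn (hcont.mono hsub)) (by simp) (by fun_prop) ?_ ?_
    (right_mem_Icc.2 hab)
  · intro t _
    have := (((hasDerivAt_id t).sub_const a).const_mul c).const_sub (V (x a ξ u))
    simpa using this.hasDerivWithinAt
  · intro t ht r hr
    have ht0 : 0 ≤ t := ha.trans ht.1
    obtain ⟨ε, hε, hεr⟩ : ∃ ε > 0, -c + 2 * (ε * F) < r := by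
      refine ⟨(r + c) / (4 * (F + 1)), by apply div_pos <;> linarith, ?_⟩
      have : (r + c) / (4 * (F + 1)) * F ≤ (r + c) / 4 := by
        rw [div_mul_eq_mul_div, div_le_div_iff₀ (by linarith) (by norm_num)]
        nlinarith
      linarith
    have hctw : Tendsto (fun s => x s ξ u) (𝓝[≥] t) (𝓝 (x t ξ u)) :=
      (hcont t ht0).mono (Ici_subset_Ici.2 ht0)
    have hcf : ∀ᶠ s in 𝓝[≥] t, ‖fderiv ℝ V (x s ξ u) - fderiv ℝ V (x t ξ u)‖ ≤ ε := by
      have h1 := ((hV.continuous_fderiv one_ne_zero).tendsto (x t ξ u)).comp hctw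
      have := h1.eventually (Metric.closedBall_mem_nhds _ hε)
      filter_upwards [this] with s hs
      simpa [dist_eq_norm] using hs
    have hdf : ∀ᶠ s in 𝓝[≥] t, ‖V (x s ξ u) - V (x t ξ u) -
        fderiv ℝ V (x t ξ u) (x s ξ u - x t ξ u)‖ ≤ ε * ‖x s ξ u - x t ξ u‖ :=
      hctw.eventually (((hV.differentiable one_ne_zero) (x t ξ u)).hasFDerivAt.isLittleO.def hε)
    obtain ⟨w, hw, hwsub⟩ := (mem_nhdsGE_iff_exists_Icc_subset.1 (hcf.and hdf))
    refine Eventually.frequently ?_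
    have hmin : t < min w b := lt_min hw ht.2
    filter_upwards [Ioc_mem_nhdsGT hmin] with z hz
    have hz0 : 0 ≤ z := ht0.trans hz.1.le
    have hzb : z ≤ b := hz.2.trans (min_le_right _ _)
    have hzw : z ≤ w := hz.2.trans (min_le_left _ _)
    have hpos : 0 < z - t := sub_pos.2 hz.1
    rw [slope_def_field, div_lt_iff₀ hpos]
    have hae : ∀ᵐ s ∂(volume.restrict (Icc t z)), ‖u s‖ ≤ uNorm u :=
      ae_restrict_of_ae_restrict_of_subset (fun s hs => ht0.trans hs.1) hb.ae_norm_le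
    have hii := hB.intervalIntegrable hf hu hb ξ ht0 hz0
    have hI := hB.sub_eq_integral hf hu hb ξ ht0 hz0
    have hnorm : ‖x z ξ u - x t ξ u‖ ≤ F * (z - t) := by
      rw [hI]
      have := intervalIntegral.norm_integral_le_of_norm_le_const_ae (a := t) (b := z)
        (f := fun s => f (x s ξ u) (u s)) (C := F) ?_
      · rwa [abs_of_pos hpos] at this
      · rw [uIoc_of_le hz.1.le]
        have := (ae_restrict_iff' measurableSet_Icc).1 hae
        filter_upwards [this] with s hs hsm
        exact hF _ _ (hR ξ u hu hb le_rfl le_rfl s (ht0.trans hsm.1.le))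
          (hs (Ioc_subset_Icc_self hsm))
    have hlin : fderiv ℝ V (x t ξ u) (x z ξ u - x t ξ u) ≤ (-c + ε * F) * (z - t) := by
      rw [hI, ← ContinuousLinearMap.intervalIntegral_comp_comm _ hii]
      have : (-c + ε * F) * (z - t) = ∫ _ in t..z, (-c + ε * F) := by simp; ring
      rw [this]
      refine intervalIntegral.integral_mono_ae_restrict hz.1.le
        ⟨(fderiv ℝ V (x t ξ u)).integrable_comp hii.1, (fderiv ℝ V (x t ξ u)).integrable_comp hii.2⟩ (by simp) ?_
      filter_upwards [hae, ae_restrict_mem measurableSet_Icc] with s hs hsm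
      have h1 := hd s ⟨ht.1.trans hsm.1, hsm.2.trans hzb⟩ (u s) hs
      have h2 : ‖f (x s ξ u) (u s)‖ ≤ F :=
        hF _ _ (hR ξ u hu hb le_rfl le_rfl s (ht0.trans hsm.1)) hs
      have h3 := (hwsub ⟨hsm.1, hsm.2.trans hzw⟩).1
      have h4 := (fderiv ℝ V (x s ξ u) - fderiv ℝ V (x t ξ u)).le_opNorm (f (x s ξ u) (u s))
      have h5 : ‖fderiv ℝ V (x s ξ u) - fderiv ℝ V (x t ξ u)‖ * ‖f (x s ξ u) (u s)‖ ≤ ε * F := by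
        gcongr
      have h6 := (abs_le.1 ((Real.norm_eq_abs _ ▸ h4).trans h5)).1
      rw [sub_apply] at h6
      linarith
    have h7 := (abs_le.1 (Real.norm_eq_abs _ ▸ (hwsub ⟨hz.1.le, hzw⟩).2)).2
    have h8 : ε * ‖x z ξ u - x t ξ u‖ ≤ ε * (F * (z - t)) := by gcongr
    nlinarith

lemma le_of_nonincreasing_above {v : ℝ → ℝ} {t₀ t M : ℝ} (ht : t₀ ≤ t)
    (hv : ContinuousOn v (Icc t₀ t)) (h₀ : v t₀ ≤ M)
    (hd : ∀ a ∈ Icc t₀ t, (∀ s ∈ Icc a t, M < v s) → v t ≤ v a) : v t ≤ M := by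
  by_contra! hlt
  have hcl : IsClosed (Icc t₀ t ∩ v ⁻¹' Iic M) := hv.preimage_isClosed_of_isClosed isClosed_Icc
    isClosed_Iic
  obtain ⟨a, ⟨ha, haM⟩, hmax⟩ := (isCompact_Icc.of_isClosed_subset hcl
    inter_subset_left).exists_isGreatest ⟨t₀, left_mem_Icc.2 ht, h₀⟩
  have haM : v a ≤ M := haM
  have hat : a < t := lt_of_le_of_ne ha.2 fun he => absurd (he ▸ haM) (not_le.2 hlt)
  have htend : Tendsto v (𝓝[>] a) (𝓝 (v a)) := by
    have := (hv a ha).mono_left (nhdsWithin_mono a (Ioc_subset_Icc_self.trans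
      (Icc_subset_Icc_left ha.1)))
    rwa [nhdsWithin_Ioc_eq_nhdsGT hat] at this
  have : v t ≤ v a := by
    refine ge_of_tendsto htend ?_
    filter_upwards [Ioc_mem_nhdsGT hat] with s hs
    refine hd s ⟨ha.1.trans hs.1.le, hs.2⟩ fun r hr => ?_
    by_contra! hrM
    exact absurd (hmax ⟨⟨(ha.1.trans hs.1.le).trans hr.1, hr.2⟩, hrM⟩) (not_le.2 (hs.1.trans_le hr.1))
  linarith

/-- The existence of an OLIOS-Lyapunov function implies OLIOS. -/
theorem IsBIBS.isOLIOS_of_isOLIOSLyapunov (hB : IsBIBS f x)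
    (hf : LocallyLipschitz fun q : EuclideanSpace ℝ (Fin n) × EuclideanSpace ℝ (Fin m) =>
      f q.1 q.2) (hh : Continuous h) (hh0 : h 0 = 0) (hV : IsOLIOSLyapunov f h V) :
    IsOLIOS h x := by
  obtain ⟨hVs, hV0, ⟨α₁, α₂, hα₁, hα₂, hα⟩, χ, hχ, α₃, hα₃, hα₃', hdec⟩ := hV
  have hVs1 : ContDiff ℝ 1 V := hVs.of_le (by exact_mod_cast le_top)
  obtain ⟨σ, hσ, hbd⟩ := hB.2
  obtain ⟨κ, hκ, hκh⟩ := exists_isClassK_norm_bound hh hh0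
  obtain ⟨ρ, hρ, hρα⟩ := hα₁.exists_inverse
  have hder : ∀ (ξ : EuclideanSpace ℝ (Fin n)) (u : ℝ → EuclideanSpace ℝ (Fin m)) (ε R : ℝ),
      IsInput u → BddInput u → 0 ≤ ε → max (σ ‖ξ‖) (σ (uNorm u)) ≤ R → ∀ a b, 0 ≤ a → a ≤ b →
      (∀ s ∈ Icc a b, max ε (χ (uNorm u)) ≤ V (x s ξ u)) →
      V (x b ξ u) ≤ V (x a ξ u) - α₃ ε R * (b - a) := by
    intro ξ u ε R hu hb hε hR a b ha hab hs
    refine hB.lyapunov_le_sub_mul hf hVs1 hu hb ξ ha hab fun s hsm μ hμ => ?_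
    have h1 := hs s hsm
    have h2 := hdec (x s ξ u) μ ((hχ.mono (norm_nonneg _) hμ).trans ((le_max_right _ _).trans h1))
    have h3 : ‖x s ξ u‖ ≤ R := (hbd ξ u hu hb s (ha.trans hsm.1)).trans hR
    have hR0 : 0 ≤ R := (norm_nonneg _).trans h3
    have h4 : α₃ ε R ≤ α₃ (V (x s ξ u)) R :=
      (hα₃ R hR0).mono hε ((le_max_left _ _).trans h1)
    have h5 : α₃ (V (x s ξ u)) R ≤ α₃ (V (x s ξ u)) ‖x s ξ u‖ :=
      hα₃' _ (hV0 _) (norm_nonneg _) hR0 h3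
    linarith
  have hcontV : ∀ (ξ : EuclideanSpace ℝ (Fin n)) (u : ℝ → EuclideanSpace ℝ (Fin m)),
      IsInput u → BddInput u → ContinuousOn (fun t => V (x t ξ u)) (Ici 0) := fun ξ u hu hb =>
    hVs.continuous.comp_continuousOn (hB.continuousOn hf hu hb ξ)
  have hinv : ∀ (ξ : EuclideanSpace ℝ (Fin n)) (u : ℝ → EuclideanSpace ℝ (Fin m)) (M t₀ t : ℝ),
      IsInput u → BddInput u → χ (uNorm u) ≤ M → 0 ≤ t₀ → t₀ ≤ t → V (x t₀ ξ u) ≤ M →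
      V (x t ξ u) ≤ M := by
    intro ξ u M t₀ t hu hb hM ht₀ ht h0
    have hM0 : 0 ≤ M := (hχ.nonneg (uNorm_nonneg u)).trans hM
    refine le_of_nonincreasing_above (v := fun t => V (x t ξ u)) ht
      ((hcontV ξ u hu hb).mono fun s hs => ht₀.trans hs.1) h0 fun a ha hs => ?_
    have h1 := hder ξ u 0 (max (σ ‖ξ‖) (σ (uNorm u))) hu hb le_rfl le_rfl a t
      (ht₀.trans ha.1) ha.2 fun s hsm => max_le (hM0.trans (hs s hsm).le) (hM.trans (hs s hsm).le)
    have h2 : α₃ 0 (max (σ ‖ξ‖) (σ (uNorm u))) = 0 :=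
      (hα₃ _ (le_max_of_le_left (hσ.nonneg (norm_nonneg _)))).2.2
    rw [h2] at h1
    simpa using h1
  have hlag : ∀ (ξ : EuclideanSpace ℝ (Fin n)) (u : ℝ → EuclideanSpace ℝ (Fin m)) (t : ℝ),
      IsInput u → BddInput u → 0 ≤ t → V (x t ξ u) ≤ max (α₂ ‖h ξ‖) (χ (uNorm u)) := by
    intro ξ u t hu hb ht
    refine hinv ξ u _ 0 t hu hb (le_max_right _ _) le_rfl ht (le_max_of_le_left ?_)
    rw [hB.1.zero hu ξ]
    exact (hα ξ).2
  have hout : ∀ ξ s, 0 ≤ s → V ξ ≤ s → ‖h ξ‖ ≤ ρ s := by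
    intro ξ s _ hs
    rw [← hρα ‖h ξ‖ (norm_nonneg _)]
    exact hρ.mono (hα₁.1.nonneg (norm_nonneg _)) ((hα ξ).1.trans hs)
  refine ⟨?_, fun s => ρ (α₂ s) + ρ (χ s), (hρ.comp hα₂.1).add (hρ.comp hχ), ?_⟩
  · set A : Set (ℝ × ℝ × ℝ) := {q | ∃ ξ u, IsInput u ∧ BddInput u ∧ uNorm u ≤ ‖ξ‖ ∧ q.1 = ‖ξ‖ ∧
      0 ≤ q.2.1 ∧ q.2.2 = ‖h (x q.2.1 ξ u)‖ ∧ χ (uNorm u) < V (x q.2.1 ξ u)} with hAdef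
    have hlagA : ∀ (ξ : EuclideanSpace ℝ (Fin n)) (u : ℝ → EuclideanSpace ℝ (Fin m)) (t : ℝ),
        IsInput u → BddInput u → 0 ≤ t → χ (uNorm u) < V (x t ξ u) →
        V (x t ξ u) ≤ α₂ (κ ‖ξ‖) := by
      intro ξ u t hu hb ht hlt
      rcases le_max_iff.1 (hlag ξ u t hu hb ht) with h1 | h1
      · exact h1.trans (hα₂.1.mono (norm_nonneg _) (hκh ξ))
      · exact absurd h1 (not_le.2 hlt)
    have hA1 : ∀ r t a, (r, t, a) ∈ A → 0 ≤ r := by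
      rintro r t a ⟨ξ, u, -, -, -, hr, -⟩
      exact (norm_nonneg ξ).trans_eq hr.symm
    have hA2 : ∀ r t a, (r, t, a) ∈ A → a ≤ ρ (α₂ (κ r)) := by
      rintro r t a ⟨ξ, u, hu, hb, -, hr, ht, ha, hlt⟩
      simp only at hr ht ha hlt ⊢
      rw [ha, hr]
      exact hout _ _ (hα₂.1.nonneg (hκ.nonneg (norm_nonneg _))) (hlagA ξ u t hu hb ht hlt)
    have hA3 : ∀ R, 0 ≤ R → ∀ ε > 0, ∃ T, ∀ r t a, (r, t, a) ∈ A → r ≤ R → T ≤ t → a ≤ ε := by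
      intro R hR ε hε
      have hε' : 0 < α₁ ε := hα₁.1.pos hε
      have hpos : 0 < α₃ (α₁ ε) (σ R) := (hα₃ _ (hσ.nonneg hR)).pos hε'
      refine ⟨α₂ (κ R) / α₃ (α₁ ε) (σ R) + 1, ?_⟩
      rintro r t a ⟨ξ, u, hu, hb, hle, hr, ht, ha, hlt⟩ hrR hT
      simp only at hr ht ha hlt
      rw [ha, ← hρα ε hε.le]
      refine hout _ _ hε'.le ?_
      by_contra! hgt
      have hall : ∀ s ∈ Icc 0 t, max (α₁ ε) (χ (uNorm u)) ≤ V (x s ξ u) := by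
        intro s hs
        by_contra! hcon
        have := hinv ξ u _ s t hu hb (le_max_right _ _) hs.1 hs.2 hcon.le
        exact absurd this (not_le.2 (max_lt hgt hlt))
      have h1 := hder ξ u (α₁ ε) (σ R) hu hb hε'.le (max_le (hσ.mono (norm_nonneg _) (hr ▸ hrR))
        (hσ.mono (uNorm_nonneg _) (hle.trans (hr ▸ hrR)))) 0 t le_rfl ht hall
      have h2 : V (x 0 ξ u) ≤ α₂ (κ R) := by
        rw [hB.1.zero hu ξ]
        exact (hα ξ).2.trans (hα₂.1.mono (norm_nonneg _) ((hκh ξ).trans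
          (hκ.mono (norm_nonneg _) (hr ▸ hrR))))
      have h3 : α₂ (κ R) < α₃ (α₁ ε) (σ R) * t := by
        rw [← div_lt_iff₀' hpos]
        linarith
      have := hV0 (x t ξ u)
      linarith
    obtain ⟨β, hβ, hβA⟩ := exists_isClassKL_bound A (κ := fun r => ρ (α₂ (κ r)))
      (hρ.comp (hα₂.1.comp hκ)) hA1 hA2 hA3
    refine ⟨β, fun s => ρ (χ s) + ρ (α₂ (κ s)), hβ, (hρ.comp hχ).add (hρ.comp (hα₂.1.comp hκ)),
      fun ξ u hu hb t ht => ?_⟩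
    have hc := uNorm_nonneg u
    have hp1 := hρ.nonneg (hχ.nonneg hc)
    have hp2 := hρ.nonneg (hα₂.1.nonneg (hκ.nonneg hc))
    by_cases h1 : V (x t ξ u) ≤ χ (uNorm u)
    · refine le_max_of_le_right ?_
      have := hout _ _ (hχ.nonneg hc) h1
      linarith
    · push Not at h1
      by_cases h2 : uNorm u ≤ ‖ξ‖
      · exact le_max_of_le_left (hβA _ _ _ ⟨ξ, u, hu, hb, h2, rfl, ht, rfl, h1⟩ ht)
      · refine le_max_of_le_right ?_
        have h3 := (hlagA ξ u t hu hb ht h1).trans (hα₂.1.mono (hκ.nonneg (norm_nonneg _))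
          (hκ.mono (norm_nonneg _) (not_le.1 h2).le))
        have := hout _ _ (hα₂.1.nonneg (hκ.nonneg hc)) h3
        linarith
  · intro ξ u hu hb t ht
    have hc := uNorm_nonneg u
    have key : ∀ s, 0 ≤ s → V (x t ξ u) ≤ max (α₂ s) (χ s) →
        ‖h (x t ξ u)‖ ≤ ρ (α₂ s) + ρ (χ s) := by
      intro s hs hle
      have hp1 := hρ.nonneg (hχ.nonneg hs)
      have hp2 := hρ.nonneg (hα₂.1.nonneg hs)
      rcases le_max_iff.1 hle with h1 | h1
      · have := hout _ _ (hα₂.1.nonneg hs) h1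
        linarith
      · have := hout _ _ (hχ.nonneg hs) h1
        linarith
    rcases le_max_iff.1 (hlag ξ u t hu hb ht) with h1 | h1
    · exact le_max_of_le_left (key _ (norm_nonneg _) (le_max_of_le_left h1))
    · exact le_max_of_le_right (key _ hc (le_max_of_le_right h1))

end Sufficiency

section MarginFunctions

/-- The part of the output size `a` which exceeds the threshold `b`, truncated at `a`. -/
def outputMargin (a b : ℝ) : ℝ := max 0 (min a (2 * (a - b)))

/-- An increasing weight with values in `[1, 2)`. -/
def timeWeight (t : ℝ) : ℝ := 2 - 1 / (1 + t)

lemma outputMargin_nonneg (a b : ℝ) : 0 ≤ outputMargin a b := le_max_left _ _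

lemma outputMargin_le {a : ℝ} (ha : 0 ≤ a) (b : ℝ) : outputMargin a b ≤ a :=
  max_le ha (min_le_left _ _)

lemma outputMargin_antitone {a b b' : ℝ} (hb : b ≤ b') : outputMargin a b' ≤ outputMargin a b :=
  max_le_max le_rfl (min_le_min le_rfl (by linarith))

lemma outputMargin_eq {a b : ℝ} (ha : 0 ≤ a) (hb : 2 * b ≤ a) : outputMargin a b = a := by
  rw [outputMargin, min_eq_left (by linarith), max_eq_right ha]

lemma lt_of_outputMargin_pos {a b : ℝ} (h : 0 < outputMargin a b) : b < a := by
  rcases lt_max_iff.1 h with h | h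
  · exact absurd h (lt_irrefl _)
  · linarith [h.trans_le (min_le_right _ _)]

lemma outputMargin_le_add (a a' b : ℝ) :
    outputMargin a b ≤ outputMargin a' b + 2 * |a - a'| := by
  have h1 := le_abs_self (a - a')
  have h2 := abs_nonneg (a - a')
  have h3 : (0:ℝ) ≤ outputMargin a' b := le_max_left _ _
  have h4 : min a' (2 * (a' - b)) ≤ outputMargin a' b := le_max_right _ _
  refine max_le (by linarith) ?_
  rcases min_le_iff.1 h4 with h5 | h5
  · exact (min_le_left _ _).trans (by linarith)
  · exact (min_le_right _ _).trans (by linarith)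

lemma one_le_timeWeight {t : ℝ} (ht : 0 ≤ t) : 1 ≤ timeWeight t := by
  have : 1 / (1 + t) ≤ 1 := by rw [div_le_one] <;> linarith
  unfold timeWeight
  linarith

lemma timeWeight_le_two {t : ℝ} (ht : 0 ≤ t) : timeWeight t ≤ 2 := by
  have : 0 ≤ 1 / (1 + t) := by positivity
  unfold timeWeight
  linarith

lemma timeWeight_add_le {τ s T : ℝ} (hτ : 0 ≤ τ) (hτ1 : τ ≤ 1) (hs : 0 ≤ s) (hT : s ≤ T) :
    timeWeight s + τ / (2 + T) ^ 2 ≤ timeWeight (τ + s) := by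
  have h1 : timeWeight (τ + s) - timeWeight s = τ / ((1 + s) * (1 + (τ + s))) := by
    unfold timeWeight
    field_simp
    ring
  have h2 : τ / (2 + T) ^ 2 ≤ τ / ((1 + s) * (1 + (τ + s))) := by
    apply div_le_div_of_nonneg_left hτ (by positivity)
    nlinarith
  linarith

end MarginFunctions

section ValueFunction

variable {n m p : ℕ}
  {f : EuclideanSpace ℝ (Fin n) → EuclideanSpace ℝ (Fin m) → EuclideanSpace ℝ (Fin n)}
  {h : EuclideanSpace ℝ (Fin n) → EuclideanSpace ℝ (Fin p)}
  {x : ℝ → EuclideanSpace ℝ (Fin n) → (ℝ → EuclideanSpace ℝ (Fin m)) → EuclideanSpace ℝ (Fin n)}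
  {β : ℝ → ℝ → ℝ} {γ σ : ℝ → ℝ}

/-- The values over which `outputValue` is the supremum. -/
def outputValueSet (h : EuclideanSpace ℝ (Fin n) → EuclideanSpace ℝ (Fin p))
    (x : ℝ → EuclideanSpace ℝ (Fin n) → (ℝ → EuclideanSpace ℝ (Fin m)) → EuclideanSpace ℝ (Fin n))
    (γ : ℝ → ℝ) (ξ : EuclideanSpace ℝ (Fin n)) : Set ℝ :=
  {q | ∃ t u, 0 ≤ t ∧ IsInput u ∧ BddInput u ∧
    q = outputMargin ‖h (x t ξ u)‖ (γ (uNorm u)) * timeWeight t}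

/-- The weighted largest excess of the output over the input gain along all trajectories. -/
def outputValue (h : EuclideanSpace ℝ (Fin n) → EuclideanSpace ℝ (Fin p))
    (x : ℝ → EuclideanSpace ℝ (Fin n) → (ℝ → EuclideanSpace ℝ (Fin m)) → EuclideanSpace ℝ (Fin n))
    (γ : ℝ → ℝ) (ξ : EuclideanSpace ℝ (Fin n)) : ℝ :=
  sSup (outputValueSet h x γ ξ)

/-- Outputs exceeding the gain `γ` decay at the rate `β` and are bounded by `σ` of the initial
output. -/
def IsOutputDecay (h : EuclideanSpace ℝ (Fin n) → EuclideanSpace ℝ (Fin p))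
    (x : ℝ → EuclideanSpace ℝ (Fin n) → (ℝ → EuclideanSpace ℝ (Fin m)) → EuclideanSpace ℝ (Fin n))
    (β : ℝ → ℝ → ℝ) (γ σ : ℝ → ℝ) : Prop :=
  IsClassKL β ∧ IsClassKInfty γ ∧ IsClassK σ ∧
  ∀ ξ u, IsInput u → BddInput u → ∀ t, 0 ≤ t → γ (uNorm u) < ‖h (x t ξ u)‖ →
    ‖h (x t ξ u)‖ ≤ β ‖ξ‖ t ∧ ‖h (x t ξ u)‖ ≤ σ ‖h ξ‖

lemma IsOLIOS.exists_isOutputDecay (hO : IsOLIOS h x) :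
    ∃ β γ σ, IsOutputDecay h x β γ σ := by
  obtain ⟨⟨β, γ, hβ, hγ, hios⟩, σ, hσ, hol⟩ := hO
  refine ⟨β, fun s => (σ s + γ s) + s, σ, hβ, (hσ.add hγ).add_id, hσ,
    fun ξ u hu hb t ht hlt => ?_⟩
  have hc := uNorm_nonneg u
  have h1 := hσ.nonneg hc
  have h2 := hγ.nonneg hc
  refine ⟨(le_max_iff.1 (hios ξ u hu hb t ht)).resolve_right fun h3 => ?_,
    (le_max_iff.1 (hol ξ u hu hb t ht)).resolve_right fun h3 => ?_⟩ <;> linarith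

lemma IsOutputDecay.le_of_mem (hD : IsOutputDecay h x β γ σ) {ξ : EuclideanSpace ℝ (Fin n)} {q : ℝ}
    (hq : q ∈ outputValueSet h x γ ξ) : q ≤ 2 * σ ‖h ξ‖ := by
  obtain ⟨t, u, ht, hu, hb, rfl⟩ := hq
  have hσ := hD.2.2.1.nonneg (norm_nonneg (h ξ))
  have h1 := outputMargin_nonneg ‖h (x t ξ u)‖ (γ (uNorm u))
  have h3 := timeWeight_le_two ht
  have h4 := one_le_timeWeight ht
  rcases h1.eq_or_lt with h2 | h2
  · rw [← h2]; linarith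
  · have h5 := (hD.2.2.2 ξ u hu hb t ht (lt_of_outputMargin_pos h2)).2
    have h6 := outputMargin_le (norm_nonneg (h (x t ξ u))) (γ (uNorm u))
    nlinarith

lemma IsOutputDecay.bddAbove (hD : IsOutputDecay h x β γ σ) (ξ : EuclideanSpace ℝ (Fin n)) :
    BddAbove (outputValueSet h x γ ξ) := ⟨_, fun _ hq => hD.le_of_mem hq⟩

lemma IsOutputDecay.norm_mem (hD : IsOutputDecay h x β γ σ) (hB : IsBIBS f x)
    (ξ : EuclideanSpace ℝ (Fin n)) : ‖h ξ‖ ∈ outputValueSet h x γ ξ := by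
  refine ⟨0, fun _ => 0, le_rfl, isInput_const 0, bddInput_const 0, ?_⟩
  have h0 : uNorm (fun _ : ℝ => (0 : EuclideanSpace ℝ (Fin m))) = 0 :=
    le_antisymm (by simpa using uNorm_const_le (0 : EuclideanSpace ℝ (Fin m))) (uNorm_nonneg _)
  rw [hB.1.zero (isInput_const 0), h0, hD.2.1.1.2.2, outputMargin_eq (norm_nonneg _) (by simp)]
  norm_num [timeWeight]

lemma IsOutputDecay.norm_le_outputValue (hD : IsOutputDecay h x β γ σ) (hB : IsBIBS f x)
    (ξ : EuclideanSpace ℝ (Fin n)) : ‖h ξ‖ ≤ outputValue h x γ ξ :=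
  le_csSup (hD.bddAbove ξ) (hD.norm_mem hB ξ)

lemma IsOutputDecay.outputValue_le (hD : IsOutputDecay h x β γ σ) (hB : IsBIBS f x)
    (ξ : EuclideanSpace ℝ (Fin n)) : outputValue h x γ ξ ≤ 2 * σ ‖h ξ‖ :=
  csSup_le ⟨_, hD.norm_mem hB ξ⟩ fun _ hq => hD.le_of_mem hq

lemma IsClassKInfty.exists_le_of_le {α : ℝ → ℝ} (hα : IsClassKInfty α) (M : ℝ) :
    ∃ U, ∀ s, α s ≤ M → s ≤ U := by
  obtain ⟨U, hU⟩ := (hα.2.eventually (eventually_gt_atTop M)).exists_forall_of_atTop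
  exact ⟨U, fun s hs => le_of_not_ge fun hc => absurd hs (not_le.2 (hU s hc))⟩

/-- Values bounded away from zero are attained with bounded inputs in bounded time. -/
lemma IsOutputDecay.exists_bounds (hD : IsOutputDecay h x β γ σ) (hh : Continuous h) (hh0 : h 0 = 0)
    (R : ℝ) {r : ℝ} (hr : 0 < r) :
    ∃ U T, 0 ≤ T ∧ ∀ ξ u t, ‖ξ‖ ≤ R → IsInput u → BddInput u → 0 ≤ t →
      r ≤ outputMargin ‖h (x t ξ u)‖ (γ (uNorm u)) * timeWeight t → uNorm u ≤ U ∧ t ≤ T := by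
  obtain ⟨κ, hκ, hκh⟩ := exists_isClassK_norm_bound hh hh0
  obtain ⟨U, hU⟩ := hD.2.1.exists_le_of_le (σ (κ |R|))
  obtain ⟨T, hT⟩ := (((hD.1.2 |R| (abs_nonneg R)).2).eventually
    (gt_mem_nhds (half_pos hr))).exists_forall_of_atTop
  refine ⟨U, max T 0, le_max_right _ _, fun ξ u t hξ hu hb ht hle => ?_⟩
  have hξ' : ‖ξ‖ ≤ |R| := hξ.trans (le_abs_self R)
  have h1 := outputMargin_nonneg ‖h (x t ξ u)‖ (γ (uNorm u))
  have h2 := outputMargin_le (norm_nonneg (h (x t ξ u))) (γ (uNorm u))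
  have h3 := timeWeight_le_two ht
  have h4 := one_le_timeWeight ht
  have h5 : 0 < outputMargin ‖h (x t ξ u)‖ (γ (uNorm u)) := by
    refine h1.lt_of_ne fun h0 => ?_
    rw [← h0] at hle
    linarith
  have h6 := lt_of_outputMargin_pos h5
  have h7 := hD.2.2.2 ξ u hu hb t ht h6
  refine ⟨hU _ (h6.le.trans (h7.2.trans (hD.2.2.1.mono (norm_nonneg _) ((hκh ξ).trans
    (hκ.mono (norm_nonneg _) hξ'))))), ?_⟩
  by_contra! hcon
  have h8 := hT t ((le_max_left _ _).trans hcon.le)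
  have h9 := h7.1.trans ((hD.1.1 t ht).mono (norm_nonneg _) hξ')
  nlinarith

/-- Where it is bounded below, `outputValue` is Lipschitz on bounded sets. -/
lemma IsOutputDecay.exists_lipschitz (hD : IsOutputDecay h x β γ σ) (hB : IsBIBS f x)
    (hf : LocallyLipschitz fun q : EuclideanSpace ℝ (Fin n) × EuclideanSpace ℝ (Fin m) =>
      f q.1 q.2) (hh : LocallyLipschitz h) (hh0 : h 0 = 0) (R : ℝ) {r : ℝ} (hr : 0 < r) :
    ∃ C, 0 ≤ C ∧ ∀ ξ ξ', ‖ξ‖ ≤ R → ‖ξ'‖ ≤ R → r ≤ outputValue h x γ ξ →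
      outputValue h x γ ξ ≤ outputValue h x γ ξ' + C * ‖ξ - ξ'‖ := by
  obtain ⟨U, T, hT, hUT⟩ := hD.exists_bounds hh.continuous hh0 R (half_pos hr)
  obtain ⟨R', hRR', hR'⟩ := hB.exists_bound R U
  obtain ⟨C, hC, hflow⟩ := hB.exists_lipschitz_flow hf R U T
  obtain ⟨K, hK⟩ := LocallyLipschitzOn.exists_lipschitzOnWith_of_compact
    (isCompact_closedBall (0 : EuclideanSpace ℝ (Fin n)) R') hh.locallyLipschitzOn
  refine ⟨4 * K * C, by positivity, fun ξ ξ' hξ hξ' hle => ?_⟩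
  by_contra! hlt
  obtain ⟨q, hq, hqlt⟩ := exists_lt_of_lt_csSup ⟨_, hD.norm_mem hB ξ⟩
    (max_lt hlt (by linarith : r / 2 < outputValue h x γ ξ))
  obtain ⟨t, u, ht, hu, hb, rfl⟩ := hq
  obtain ⟨hu', ht'⟩ := hUT ξ u t hξ hu hb ht ((le_max_right _ _).trans hqlt.le)
  have hq' : outputMargin ‖h (x t ξ' u)‖ (γ (uNorm u)) * timeWeight t ≤ outputValue h x γ ξ' :=
    le_csSup (hD.bddAbove ξ') ⟨t, u, ht, hu, hb, rfl⟩
  have h1 : |‖h (x t ξ u)‖ - ‖h (x t ξ' u)‖| ≤ K * (C * ‖ξ - ξ'‖) := by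
    refine (abs_norm_sub_norm_le _ _).trans ?_
    rw [← dist_eq_norm]
    refine (hK.dist_le_mul _ ?_ _ ?_).trans ?_
    · simpa using hR' ξ u hu hb hξ hu' t ht
    · simpa using hR' ξ' u hu hb hξ' hu' t ht
    · rw [dist_eq_norm]
      gcongr
      exact hflow ξ ξ' u hu hb hξ hξ' hu' t ht ht'
  have h2 := outputMargin_le_add ‖h (x t ξ u)‖ ‖h (x t ξ' u)‖ (γ (uNorm u))
  have h3 := timeWeight_le_two ht
  have h4 := one_le_timeWeight ht
  have h5 := abs_nonneg (‖h (x t ξ u)‖ - ‖h (x t ξ' u)‖)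
  have h6 := (le_max_left _ _).trans_lt hqlt
  have h7 := mul_le_mul_of_nonneg_right h2 (zero_le_one.trans h4)
  nlinarith

/-- `outputValue` decreases at a uniform rate along trajectories with small constant input. -/
lemma IsOutputDecay.exists_decrease (hD : IsOutputDecay h x β γ σ) (hB : IsBIBS f x)
    (hf : LocallyLipschitz fun q : EuclideanSpace ℝ (Fin n) × EuclideanSpace ℝ (Fin m) =>
      f q.1 q.2) (hh : Continuous h) (hh0 : h 0 = 0) (R U : ℝ) {r : ℝ} (hr : 0 < r) :
    ∃ c, 0 < c ∧ ∀ η μ, ‖η‖ ≤ R → ‖μ‖ ≤ U → r ≤ outputValue h x γ η →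
      5 * γ ‖μ‖ ≤ outputValue h x γ η → ∀ τ, 0 ≤ τ → τ ≤ 1 →
      outputValue h x γ (x τ η fun _ => μ) ≤ outputValue h x γ η - c * τ := by
  obtain ⟨R', hRR', hR'⟩ := hB.exists_bound R U
  obtain ⟨_, T, hT, hUT⟩ := hD.exists_bounds hh hh0 R' (by positivity : 0 < 7 / 8 * r)
  refine ⟨min (7 / 16 * r / (2 + T) ^ 2) (r / 8), by positivity,
    fun η μ hη hμ hrη hμη τ hτ hτ1 => csSup_le ⟨_, hD.norm_mem hB _⟩ ?_⟩
  rintro q ⟨s, v, hs, hv, hb, rfl⟩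
  have hc1 : min (7 / 16 * r / (2 + T) ^ 2) (r / 8) * τ ≤ 7 / 16 * r / (2 + T) ^ 2 * τ := by
    gcongr; exact min_le_left _ _
  have hc2 : min (7 / 16 * r / (2 + T) ^ 2) (r / 8) * τ ≤ r / 8 * 1 := by
    gcongr; exact min_le_right _ _
  set a := ‖h (x s (x τ η fun _ => μ) v)‖ with ha
  by_cases hsmall : outputMargin a (γ (uNorm v)) * timeWeight s ≤ 7 / 8 * outputValue h x γ η
  · linarith
  push Not at hsmall
  have hη' : ‖x τ η fun _ => μ‖ ≤ R' :=
    hR' η _ (isInput_const μ) (bddInput_const μ) hη ((uNorm_const_le μ).trans hμ) τ hτ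
  have hsT : s ≤ T := (hUT _ v s hη' hv hb hs (by linarith)).2
  have hwb := bddInput_prependConst (τ := τ) (μ := μ) hb
  have hw := hwb.isInput (measurable_prependConst (τ := τ) (μ := μ) hv.1)
  have hmem : outputMargin a (γ (uNorm (prependConst τ μ v))) * timeWeight (τ + s) ≤
      outputValue h x γ η := by
    refine le_csSup (hD.bddAbove η) ⟨τ + s, prependConst τ μ v, by linarith, hw, hwb, ?_⟩
    rw [hB.flow_prependConst hf hv hb η μ hτ hs]
  have ha0 : 0 ≤ a := norm_nonneg _
  have h1 := outputMargin_le ha0 (γ (uNorm v))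
  have h2 := timeWeight_le_two hs
  have h3 := one_le_timeWeight hs
  have h4 := outputMargin_nonneg a (γ (uNorm v))
  have h5 : outputMargin a (γ (uNorm v)) ≤ outputMargin a (γ (uNorm (prependConst τ μ v))) := by
    rcases le_max_iff.1 (uNorm_prependConst_le (τ := τ) (μ := μ) hb) with h6 | h6
    · have h7 := hD.2.1.1.mono (uNorm_nonneg _) h6
      rw [outputMargin_eq ha0 (b := γ (uNorm (prependConst τ μ v))) (by nlinarith)]
      exact h1
    · exact outputMargin_antitone (hD.2.1.1.mono (uNorm_nonneg _) h6)
  have h6 := timeWeight_add_le hτ hτ1 hs hsT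
  have h7 : 7 / 16 * r ≤ outputMargin a (γ (uNorm v)) := by nlinarith
  have h8 : 0 ≤ τ / (2 + T) ^ 2 := by positivity
  have h9 : 7 / 16 * r / (2 + T) ^ 2 * τ = 7 / 16 * r * (τ / (2 + T) ^ 2) := by ring
  have h10 : 7 / 16 * r * (τ / (2 + T) ^ 2) ≤ outputMargin a (γ (uNorm v)) * (τ / (2 + T) ^ 2) := by
    gcongr
  have h11 : outputMargin a (γ (uNorm v)) * (timeWeight s + τ / (2 + T) ^ 2) ≤
      outputMargin a (γ (uNorm (prependConst τ μ v))) * timeWeight (τ + s) := by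
    gcongr
    exact outputMargin_nonneg _ _
  linarith

end ValueFunction

section Mollification

variable {n : ℕ}

open scoped ContDiff Convolution

/-- A standard mollifier: smooth, nonnegative, supported in the closed unit ball, of integral one. -/
lemma exists_mollifier (n : ℕ) : ∃ ρ : EuclideanSpace ℝ (Fin n) → ℝ, ContDiff ℝ ∞ ρ ∧
    HasCompactSupport ρ ∧ (∀ z, 0 ≤ ρ z) ∧ (∀ z, 1 < ‖z‖ → ρ z = 0) ∧ ∫ z, ρ z = 1 := by
  let φ : ContDiffBump (0 : EuclideanSpace ℝ (Fin n)) := ⟨1 / 2, 1, by norm_num, by norm_num⟩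
  refine ⟨φ.normed volume, φ.contDiff_normed, φ.hasCompactSupport_normed, φ.nonneg_normed,
    fun z hz => ?_, φ.integral_normed⟩
  have : z ∉ Function.support (φ.normed volume) := by
    rw [φ.support_normed_eq]
    simpa [φ] using hz.le
  simpa using this

/-- Below any positive radial antitone bound there is a smooth positive function whose local
Lipschitz constants obey the same bound. -/
lemma exists_smooth_radius (n : ℕ) {δ : ℝ → ℝ} (hδ : Antitone δ) (hpos : ∀ r, 0 < δ r) :
    ∃ ε : EuclideanSpace ℝ (Fin n) → ℝ, ContDiff ℝ ∞ ε ∧ ∀ ξ, 0 < ε ξ ∧ ε ξ ≤ δ ‖ξ‖ ∧ ε ξ ≤ 1 ∧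
      ∀ ξ', ‖ξ' - ξ‖ ≤ 1 → |ε ξ' - ε ξ| ≤ δ ‖ξ‖ * ‖ξ' - ξ‖ := by
  obtain ⟨ρ, hρ, hρc, hρ0, hρs, hρi⟩ := exists_mollifier n
  obtain ⟨K, hK⟩ := ContDiff.lipschitzWith_of_hasCompactSupport hρc hρ (by simp)
  set B : EuclideanSpace ℝ (Fin n) → ℝ := fun w => min (δ (‖w‖ + 2)) 1 with hBdef
  have hB0 : ∀ w, 0 ≤ B w := fun w => le_min (hpos _).le zero_le_one
  have hB1 : ∀ w, B w ≤ 1 := fun w => min_le_right _ _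
  have hBm : Measurable B := by
    have : Measurable fun w : EuclideanSpace ℝ (Fin n) => δ (‖w‖ + 2) :=
      hδ.measurable.comp (by fun_prop)
    exact this.min measurable_const
  have hBl : LocallyIntegrable B := (locallyIntegrable_const (1:ℝ)).mono hBm.aestronglyMeasurable
    (Eventually.of_forall fun w => by
      rw [Real.norm_of_nonneg (hB0 w)]; simpa using hB1 w)
  have hint : ∀ ξ, Integrable fun w => B w * ρ (ξ - w) := by
    intro ξ
    have h1 : Integrable fun w => ρ (ξ - w) :=
      (hρ.continuous.integrable_of_hasCompactSupport hρc).comp_sub_left ξ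
    exact h1.bdd_mul hBm.aestronglyMeasurable (c := 1) (Eventually.of_forall fun w => by
      rw [Real.norm_of_nonneg (hB0 w)]; exact hB1 w)
  have hρξ : ∀ ξ, Integrable fun w => ρ (ξ - w) := fun ξ =>
      (hρ.continuous.integrable_of_hasCompactSupport hρc).comp_sub_left ξ
  have hρξi : ∀ ξ, ∫ w, ρ (ξ - w) = 1 := fun ξ => by
    rw [integral_sub_left_eq_self, hρi]
  have hBle : ∀ ξ w : EuclideanSpace ℝ (Fin n), ‖ξ - w‖ ≤ 2 → B w ≤ min (δ ‖ξ‖) 1 := by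
    intro ξ w hw
    refine min_le_min (hδ ?_) le_rfl
    have := norm_le_norm_add_norm_sub' ξ w
    linarith
  set I : EuclideanSpace ℝ (Fin n) → ℝ := fun ξ => ∫ w, B w * ρ (ξ - w) with hI
  set m : ℝ := volume.real (Metric.closedBall (0 : EuclideanSpace ℝ (Fin n)) 2)
  have hm : 0 ≤ m := measureReal_nonneg
  have hIsm : ContDiff ℝ ∞ I := by
    have := hρc.contDiff_convolution_right (ContinuousLinearMap.mul ℝ ℝ) hBl hρ
    exact this
  have hIle : ∀ ξ, I ξ ≤ min (δ ‖ξ‖) 1 := by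
    intro ξ
    have : ∫ w, min (δ ‖ξ‖) 1 * ρ (ξ - w) = min (δ ‖ξ‖) 1 := by
      rw [integral_const_mul, hρξi, mul_one]
    rw [← this]
    refine integral_mono (hint ξ) ((hρξ ξ).const_mul _) fun w => ?_
    by_cases hw : ‖ξ - w‖ ≤ 1
    · exact mul_le_mul_of_nonneg_right (hBle ξ w (by linarith)) (hρ0 _)
    · simp [hρs _ (not_le.1 hw)]
  have hIpos : ∀ ξ, 0 < I ξ := by
    intro ξ
    have hp : 0 < min (δ (‖ξ‖ + 3)) 1 := lt_min (hpos _) one_pos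
    have : ∫ w, min (δ (‖ξ‖ + 3)) 1 * ρ (ξ - w) = min (δ (‖ξ‖ + 3)) 1 := by
      rw [integral_const_mul, hρξi, mul_one]
    refine hp.trans_le ?_
    rw [← this]
    refine integral_mono ((hρξ ξ).const_mul _) (hint ξ) fun w => ?_
    by_cases hw : ‖ξ - w‖ ≤ 1
    · refine mul_le_mul_of_nonneg_right (min_le_min (hδ ?_) le_rfl) (hρ0 _)
      have := norm_le_norm_add_norm_sub ξ w
      linarith
    · simp [hρs _ (not_le.1 hw)]
  have hIlip : ∀ ξ ξ', ‖ξ' - ξ‖ ≤ 1 → |I ξ' - I ξ| ≤ (K * m) * (δ ‖ξ‖ * ‖ξ' - ξ‖) := by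
    intro ξ ξ' hle
    have h1 : I ξ' - I ξ = ∫ w in Metric.closedBall ξ 2, (B w * ρ (ξ' - w) - B w * ρ (ξ - w)) := by
      rw [setIntegral_eq_integral_of_forall_compl_eq_zero, integral_sub (hint ξ') (hint ξ)]
      intro w hw
      have hw' : 2 < ‖ξ - w‖ := by simpa [dist_eq_norm, norm_sub_rev] using hw
      have h2 : 1 < ‖ξ' - w‖ := by
        have := norm_sub_le_norm_sub_add_norm_sub ξ ξ' w
        rw [norm_sub_rev ξ ξ'] at this
        linarith
      simp [hρs _ h2, hρs _ (by linarith : 1 < ‖ξ - w‖)]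
    rw [h1, ← Real.norm_eq_abs]
    refine (norm_setIntegral_le_of_norm_le_const (C := δ ‖ξ‖ * (K * ‖ξ' - ξ‖))
      measure_closedBall_lt_top fun w hw => ?_).trans ?_
    · rw [← mul_sub, norm_mul, Real.norm_of_nonneg (hB0 w)]
      have hw' : ‖ξ - w‖ ≤ 2 := by simpa [dist_eq_norm, norm_sub_rev] using hw
      have h3 := hK.dist_le_mul (ξ' - w) (ξ - w)
      rw [dist_eq_norm, dist_eq_norm, sub_sub_sub_cancel_right] at h3
      exact mul_le_mul ((hBle ξ w hw').trans (min_le_left _ _)) h3 (norm_nonneg _) (hpos _).le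
    · have : volume.real (Metric.closedBall ξ 2) = m := by
        simp only [m, measureReal_def, Measure.addHaar_closedBall_center volume ξ 2]
      rw [this]
      exact le_of_eq (by ring)
  set c : ℝ := (K * m + 1)⁻¹ with hc
  have hKm : 0 ≤ K * m := by positivity
  have hcpos : 0 < c := by positivity
  have hc1 : c ≤ 1 := inv_le_one_of_one_le₀ (by linarith)
  have hcK : c * (K * m) ≤ 1 := by
    rw [hc, inv_mul_le_iff₀ (by linarith)]
    linarith
  refine ⟨fun ξ => c * I ξ, contDiff_const.mul hIsm, fun ξ => ⟨mul_pos hcpos (hIpos ξ), ?_, ?_, ?_⟩⟩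
  · have h1 := (hIle ξ).trans (min_le_left _ _)
    nlinarith [hIpos ξ]
  · have h1 := (hIle ξ).trans (min_le_right _ _)
    nlinarith [hIpos ξ]
  · intro ξ' hle
    rw [← mul_sub, abs_mul, abs_of_pos hcpos]
    have h1 := hIlip ξ ξ' hle
    have h2 : 0 ≤ δ ‖ξ‖ * ‖ξ' - ξ‖ := mul_nonneg (hpos _).le (norm_nonneg _)
    calc c * |I ξ' - I ξ| ≤ c * ((K * m) * (δ ‖ξ‖ * ‖ξ' - ξ‖)) := by gcongr
      _ = (c * (K * m)) * (δ ‖ξ‖ * ‖ξ' - ξ‖) := by ring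
      _ ≤ 1 * (δ ‖ξ‖ * ‖ξ' - ξ‖) := by gcongr
      _ = _ := one_mul _

/-- Mollification with a variable radius: a continuous function has smooth approximations which
inherit local bounds and local one-sided directional decrease estimates. -/
lemma exists_smooth_approx {Φ : EuclideanSpace ℝ (Fin n) → ℝ} (hΦ : Continuous Φ) {δ : ℝ → ℝ}
    (hδ : Antitone δ) (hpos : ∀ r, 0 < δ r) :
    ∃ W : EuclideanSpace ℝ (Fin n) → ℝ, ContDiff ℝ ∞ W ∧
      (∀ ξ M, (∀ η, ‖η - ξ‖ ≤ δ ‖ξ‖ → Φ η ≤ M) → W ξ ≤ M) ∧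
      (∀ ξ M, (∀ η, ‖η - ξ‖ ≤ δ ‖ξ‖ → M ≤ Φ η) → M ≤ W ξ) ∧
      ∀ ξ v c t₀, 0 < t₀ → (∀ η, ‖η - ξ‖ ≤ δ ‖ξ‖ → ∀ t, 0 < t → t < t₀ → ∀ η',
        ‖η' - η - t • v‖ ≤ t * ‖v‖ * δ ‖ξ‖ → Φ η' ≤ Φ η - c * t) → fderiv ℝ W ξ v ≤ -c := by
  obtain ⟨ρ, hρ, hρc, hρ0, hρs, hρi⟩ := exists_mollifier n
  obtain ⟨ε, hε, hεp⟩ := exists_smooth_radius n hδ hpos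
  have hρint : Integrable ρ := hρ.continuous.integrable_of_hasCompactSupport hρc
  set W : EuclideanSpace ℝ (Fin n) → ℝ := fun ξ => ∫ z, ρ z * Φ (ξ - ε ξ • z) with hW
  have hint : ∀ ξ, Integrable fun z => ρ z * Φ (ξ - ε ξ • z) := by
    intro ξ
    refine Continuous.integrable_of_hasCompactSupport (hρ.continuous.mul (by fun_prop)) ?_
    exact hρc.mul_right
  have hWsm : ContDiff ℝ ∞ W := by
    have heq : W = fun ξ => (Φ ⋆[ContinuousLinearMap.mul ℝ ℝ, volume]
        (fun w => ρ ((ε ξ)⁻¹ • w) * (ε ξ ^ n)⁻¹)) ξ := by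
      funext ξ
      have hp := (hεp ξ).1
      simp only [convolution_def, ContinuousLinearMap.mul_apply']
      rw [← integral_sub_left_eq_self _ volume ξ]
      have h1 := Measure.integral_comp_smul (volume : Measure (EuclideanSpace ℝ (Fin n)))
        (fun w => ρ ((ε ξ)⁻¹ • w) * Φ (ξ - w)) (ε ξ)
      simp only [smul_smul, inv_mul_cancel₀ hp.ne', one_smul, finrank_euclideanSpace,
        Fintype.card_fin, smul_eq_mul] at h1
      rw [abs_of_pos (by positivity)] at h1
      rw [hW]
      simp only
      rw [h1, ← integral_const_mul]
      congr 1
      funext w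
      rw [sub_sub_cancel]
      ring
    rw [heq, ← contDiffOn_univ]
    refine contDiffOn_convolution_right_with_param_comp (ContinuousLinearMap.mul ℝ ℝ)
      (k := Metric.closedBall 0 1) contDiffOn_id isOpen_univ (isCompact_closedBall _ _) ?_
      hΦ.locallyIntegrable ?_
    · intro ξ w _ hw
      have hw' : 1 < ‖w‖ := by simpa using hw
      have hp := (hεp ξ).1
      rw [hρs, zero_mul]
      rw [norm_smul, norm_inv, Real.norm_of_nonneg hp.le, inv_mul_eq_div, lt_div_iff₀ hp]
      linarith [(hεp ξ).2.2.1]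
    · refine ContDiff.contDiffOn ?_
      have h1 : ContDiff ℝ ∞ fun q : EuclideanSpace ℝ (Fin n) × EuclideanSpace ℝ (Fin n) =>
          (ε q.1)⁻¹ := (hε.comp contDiff_fst).inv fun q => (hεp q.1).1.ne'
      have h2 : ContDiff ℝ ∞ fun q : EuclideanSpace ℝ (Fin n) × EuclideanSpace ℝ (Fin n) =>
          (ε q.1 ^ n)⁻¹ := ((hε.comp contDiff_fst).pow n).inv fun q =>
            (pow_pos (hεp q.1).1 n).ne'
      exact (hρ.comp (h1.smul contDiff_snd)).mul h2
  have hball : ∀ ξ z, ‖z‖ ≤ 1 → ‖ξ - ε ξ • z - ξ‖ ≤ δ ‖ξ‖ := by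
    intro ξ z hz
    rw [sub_sub_cancel_left, norm_neg, norm_smul, Real.norm_of_nonneg (hεp ξ).1.le]
    nlinarith [(hεp ξ).1, (hεp ξ).2.1, norm_nonneg z]
  have hconst : ∀ M : ℝ, ∫ z, ρ z * M = M := fun M => by rw [integral_mul_const, hρi, one_mul]
  refine ⟨W, hWsm, ?_, ?_, ?_⟩
  · intro ξ M hM
    rw [← hconst M]
    refine integral_mono (hint ξ) (hρint.mul_const M) fun z => ?_
    by_cases hz : ‖z‖ ≤ 1
    · exact mul_le_mul_of_nonneg_left (hM _ (hball ξ z hz)) (hρ0 z)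
    · simp [hρs _ (not_le.1 hz)]
  · intro ξ M hM
    rw [← hconst M]
    refine integral_mono (hρint.mul_const M) (hint ξ) fun z => ?_
    by_cases hz : ‖z‖ ≤ 1
    · exact mul_le_mul_of_nonneg_left (hM _ (hball ξ z hz)) (hρ0 z)
    · simp [hρs _ (not_le.1 hz)]
  · intro ξ v c t₀ ht₀ H
    have hd := ((hWsm.differentiable (by simp)) ξ).hasFDerivAt.hasLineDerivAt v
    have hd' := HasDerivAt.tendsto_slope_zero_right hd
    refine le_of_tendsto hd' ?_
    have hs : 0 < min t₀ (1 / (‖v‖ + 1)) := lt_min ht₀ (by positivity)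
    filter_upwards [Ioo_mem_nhdsGT hs] with t ht
    have ht1 : t < t₀ := ht.2.trans_le (min_le_left _ _)
    have htv : t * ‖v‖ ≤ 1 := by
      have := ht.2.trans_le (min_le_right _ _)
      rw [lt_div_iff₀ (by positivity)] at this
      nlinarith [ht.1]
    have hnt : ‖ξ + t • v - ξ‖ = t * ‖v‖ := by
      rw [add_sub_cancel_left, norm_smul, Real.norm_of_nonneg ht.1.le]
    simp only [zero_add, zero_smul, add_zero, smul_eq_mul]
    rw [inv_mul_le_iff₀ ht.1, sub_le_iff_le_add]
    have : t * -c + W ξ = ∫ z, (ρ z * (-c * t) + ρ z * Φ (ξ - ε ξ • z)) := by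
      rw [integral_add (hρint.mul_const _) (hint ξ), hconst, mul_comm]
    rw [this]
    refine integral_mono (hint _) ((hρint.mul_const _).add (hint ξ)) fun z => ?_
    by_cases hz : ‖z‖ ≤ 1
    · have h1 := H (ξ - ε ξ • z) (hball ξ z hz) t ht.1 ht1 (ξ + t • v - ε (ξ + t • v) • z) ?_
      · have := mul_le_mul_of_nonneg_left h1 (hρ0 z)
        simp only
        linarith
      · have h2 : ξ + t • v - ε (ξ + t • v) • z - (ξ - ε ξ • z) - t • v =
            -((ε (ξ + t • v) - ε ξ) • z) := by
          rw [sub_smul]; abel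
        have h3 := (hεp ξ).2.2.2 (ξ + t • v) (hnt.trans_le htv)
        rw [h2, norm_neg, norm_smul, Real.norm_eq_abs]
        rw [hnt] at h3
        have h4 : 0 ≤ t * ‖v‖ * δ ‖ξ‖ := mul_nonneg (mul_nonneg ht.1.le (norm_nonneg _)) (hpos _).le
        calc _ ≤ |ε (ξ + t • v) - ε ξ| * 1 := by gcongr
          _ ≤ _ := by linarith
    · simp [hρs _ (not_le.1 hz)]

end Mollification

section SmoothLevels

open scoped ContDiff

lemma exists_antitone_pos_le {d : ℕ → ℝ} (hd : ∀ k, 0 < d k) :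
    ∃ δ : ℝ → ℝ, Antitone δ ∧ (∀ r, 0 < δ r) ∧ ∀ r, δ r ≤ d ⌈r⌉₊ := by
  set g : ℕ → ℝ := fun k => ∏ i ∈ Finset.range (k + 1), min 1 (d i) with hg
  have hpos : ∀ k, 0 < g k := fun k => Finset.prod_pos fun i _ => lt_min one_pos (hd i)
  have hsucc : ∀ k, g (k + 1) = g k * min 1 (d (k + 1)) := fun k => Finset.prod_range_succ _ _
  have hanti : Antitone g := antitone_nat_of_succ_le fun k => by
    rw [hsucc]
    exact mul_le_of_le_one_right (hpos k).le (min_le_left _ _)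
  refine ⟨fun r => g ⌈r⌉₊, fun a b hab => hanti (Nat.ceil_mono hab), fun r => hpos _, fun r => ?_⟩
  have : g ⌈r⌉₊ = (∏ i ∈ Finset.range ⌈r⌉₊, min 1 (d i)) * min 1 (d ⌈r⌉₊) :=
    Finset.prod_range_succ _ _
  simp only [this]
  refine (mul_le_of_le_one_left (lt_min one_pos (hd _)).le ?_).trans (min_le_right _ _)
  exact Finset.prod_le_one (fun i _ => (lt_min one_pos (hd i)).le) fun i _ => min_le_left _ _

/-- A smooth approximation of the positive part with accuracy `r`. -/
def smoothPosPart (r v : ℝ) : ℝ := v * Real.smoothTransition (v / r)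

lemma smoothPosPart_of_nonpos {r v : ℝ} (hr : 0 < r) (hv : v ≤ 0) : smoothPosPart r v = 0 := by
  rw [smoothPosPart, Real.smoothTransition.zero_of_nonpos (div_nonpos_of_nonpos_of_nonneg hv hr.le),
    mul_zero]

lemma smoothPosPart_nonneg {r v : ℝ} (hr : 0 < r) : 0 ≤ smoothPosPart r v := by
  rcases le_total v 0 with hv | hv
  · rw [smoothPosPart_of_nonpos hr hv]
  · exact mul_nonneg hv (Real.smoothTransition.nonneg _)

lemma smoothPosPart_le {r v : ℝ} (hr : 0 < r) : smoothPosPart r v ≤ max v 0 := by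
  rcases le_total v 0 with hv | hv
  · rw [smoothPosPart_of_nonpos hr hv]
    exact le_max_right _ _
  · exact (mul_le_of_le_one_right hv (Real.smoothTransition.le_one _)).trans (le_max_left _ _)

lemma sub_le_smoothPosPart {r v : ℝ} (hr : 0 < r) : v - r ≤ smoothPosPart r v := by
  rcases le_total v r with hv | hv
  · linarith [smoothPosPart_nonneg (v := v) hr]
  · rw [smoothPosPart, Real.smoothTransition.one_of_one_le ((one_le_div hr).2 hv)]
    linarith

lemma contDiff_smoothPosPart (r : ℝ) : ContDiff ℝ ∞ (smoothPosPart r) :=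
  contDiff_id.mul (Real.smoothTransition.contDiff.comp (contDiff_id.div_const r))

lemma deriv_smoothPosPart_pos {r v : ℝ} (hr : 0 < r) (hv : 0 < v) :
    0 < deriv (smoothPosPart r) v := by
  have h1 : HasDerivAt (fun v => Real.smoothTransition (v / r))
      (deriv Real.smoothTransition (v / r) * (1 / r)) v :=
    HasDerivAt.comp (h₂ := Real.smoothTransition) v
      ((Real.smoothTransition.contDiff (n := 1)).differentiable one_ne_zero (v / r)).hasDerivAt
      ((hasDerivAt_id' v).div_const r)
  have h2 : HasDerivAt (smoothPosPart r) _ v := (hasDerivAt_id v).mul h1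
  rw [h2.deriv]
  have h3 := Real.smoothTransition.pos_of_pos (div_pos hv hr)
  have h4 : 0 ≤ deriv Real.smoothTransition (v / r) := Real.smoothTransition.monotone.deriv_nonneg
  have h5 : 0 ≤ v * (deriv Real.smoothTransition (v / r) * (1 / r)) := by positivity
  simp only [id, one_mul]
  linarith

variable {n m p : ℕ}
  {f : EuclideanSpace ℝ (Fin n) → EuclideanSpace ℝ (Fin m) → EuclideanSpace ℝ (Fin n)}
  {h : EuclideanSpace ℝ (Fin n) → EuclideanSpace ℝ (Fin p)}
  {x : ℝ → EuclideanSpace ℝ (Fin n) → (ℝ → EuclideanSpace ℝ (Fin m)) → EuclideanSpace ℝ (Fin n)}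
  {β : ℝ → ℝ → ℝ} {γ σ : ℝ → ℝ}

lemma IsOutputDecay.exists_lipschitz_max (hD : IsOutputDecay h x β γ σ) (hB : IsBIBS f x)
    (hf : LocallyLipschitz fun q : EuclideanSpace ℝ (Fin n) × EuclideanSpace ℝ (Fin m) =>
      f q.1 q.2) (hh : LocallyLipschitz h) (hh0 : h 0 = 0) (R : ℝ) {r : ℝ} (hr : 0 < r) :
    ∃ C, 0 ≤ C ∧ ∀ ξ ξ', ‖ξ‖ ≤ R → ‖ξ'‖ ≤ R →
      max (outputValue h x γ ξ) r ≤ max (outputValue h x γ ξ') r + C * ‖ξ - ξ'‖ := by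
  obtain ⟨C, hC, hlip⟩ := hD.exists_lipschitz hB hf hh hh0 R hr
  refine ⟨C, hC, fun ξ ξ' hξ hξ' => ?_⟩
  have h0 : 0 ≤ C * ‖ξ - ξ'‖ := by positivity
  rcases le_total (outputValue h x γ ξ) r with h1 | h1
  · rw [max_eq_right h1]
    linarith [le_max_right (outputValue h x γ ξ') r]
  · rw [max_eq_left h1]
    linarith [hlip ξ ξ' hξ hξ' h1, le_max_left (outputValue h x γ ξ') r]

lemma IsOutputDecay.continuous_max (hD : IsOutputDecay h x β γ σ) (hB : IsBIBS f x)
    (hf : LocallyLipschitz fun q : EuclideanSpace ℝ (Fin n) × EuclideanSpace ℝ (Fin m) =>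
      f q.1 q.2) (hh : LocallyLipschitz h) (hh0 : h 0 = 0) {r : ℝ} (hr : 0 < r) :
    Continuous fun ξ => max (outputValue h x γ ξ) r := by
  refine continuous_iff_continuousAt.2 fun ξ => ?_
  obtain ⟨C, hC, hlip⟩ := hD.exists_lipschitz_max hB hf hh hh0 (‖ξ‖ + 1) hr
  have hL : LipschitzOnWith C.toNNReal (fun ξ => max (outputValue h x γ ξ) r)
      (Metric.closedBall 0 (‖ξ‖ + 1)) := by
    refine LipschitzOnWith.of_dist_le_mul fun a ha b hb => ?_
    have ha' : ‖a‖ ≤ ‖ξ‖ + 1 := by simpa using ha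
    have hb' : ‖b‖ ≤ ‖ξ‖ + 1 := by simpa using hb
    have h1 := hlip a b ha' hb'
    have h2 := hlip b a hb' ha'
    rw [norm_sub_rev b a] at h2
    rw [Real.dist_eq, dist_eq_norm, Real.coe_toNNReal _ hC, abs_le]
    constructor <;> linarith
  refine hL.continuousOn.continuousAt ?_
  refine mem_of_superset (Metric.ball_mem_nhds ξ one_pos) fun y hy => ?_
  have h1 : ‖y - ξ‖ < 1 := by simpa [dist_eq_norm] using hy
  have h2 := norm_le_norm_add_norm_sub' y ξ
  simp
  linarith

/-- Local radius within which the truncated value function has small oscillation and decreases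
in directions close to the vector field. -/
lemma IsOutputDecay.exists_radius (hD : IsOutputDecay h x β γ σ) (hB : IsBIBS f x)
    (hf : LocallyLipschitz fun q : EuclideanSpace ℝ (Fin n) × EuclideanSpace ℝ (Fin m) =>
      f q.1 q.2) (hh : LocallyLipschitz h) (hh0 : h 0 = 0) {r : ℝ} (hr : 0 < r) (k : ℝ) :
    ∃ d > 0, ∀ ξ, ‖ξ‖ ≤ k →
      (∀ η, ‖η - ξ‖ ≤ d → |max (outputValue h x γ η) r - max (outputValue h x γ ξ) r| ≤ r / 4) ∧
      ∀ μ, 6 * γ ‖μ‖ ≤ outputValue h x γ ξ → 7 / 4 * r < outputValue h x γ ξ →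
        ∃ c > 0, ∃ t₀ > 0, ∀ η, ‖η - ξ‖ ≤ d → ∀ t, 0 < t → t < t₀ → ∀ η',
          ‖η' - η - t • f ξ μ‖ ≤ t * ‖f ξ μ‖ * d →
          max (outputValue h x γ η') r ≤ max (outputValue h x γ η) r - c * t := by
  obtain ⟨κ, hκ, hκh⟩ := exists_isClassK_norm_bound hh.continuous hh0
  obtain ⟨U, hU⟩ := hD.2.1.exists_le_of_le (2 * σ (κ |k|))
  obtain ⟨R', hRR', hR'⟩ := hB.exists_bound (k + 1) U
  obtain ⟨C, hC, hlip⟩ := hD.exists_lipschitz_max hB hf hh hh0 (max R' (k + 2)) hr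
  obtain ⟨c₀, hc₀, hdec⟩ := hD.exists_decrease hB hf hh.continuous hh0 (k + 1) U hr
  obtain ⟨F, hF0, hF⟩ := exists_norm_le_of_locallyLipschitz hf (k + 1) U
  obtain ⟨L, hL0, hL⟩ := exists_lipschitz_of_locallyLipschitz hf (k + 1) U
  obtain ⟨Q, hQ0, hQ⟩ := hB.exists_euler_bound hf (k + 1) U
  set d := min 1 (min (r / (4 * (C + 1))) (c₀ / (4 * ((C + 1) * (F + L + 1))))) with hd
  have hdpos : 0 < d := by positivity
  have hd1 : d ≤ 1 := min_le_left _ _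
  have hdC : C * d ≤ r / 4 := by
    have : d ≤ r / (4 * (C + 1)) := (min_le_right _ _).trans (min_le_left _ _)
    rw [le_div_iff₀ (by positivity)] at this
    nlinarith
  have hdF : C * (F + L) * d ≤ c₀ / 4 := by
    have : d ≤ c₀ / (4 * ((C + 1) * (F + L + 1))) := (min_le_right _ _).trans (min_le_right _ _)
    rw [le_div_iff₀ (by positivity)] at this
    have h2 : C * (F + L) ≤ (C + 1) * (F + L + 1) := by
      nlinarith
    nlinarith
  have hball : ∀ ξ : EuclideanSpace ℝ (Fin n), ‖ξ‖ ≤ k → ∀ η, ‖η - ξ‖ ≤ d → ‖η‖ ≤ k + 1 := by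
    intro ξ hξ η hη
    have := norm_le_norm_add_norm_sub' η ξ
    linarith
  have hosc : ∀ ξ : EuclideanSpace ℝ (Fin n), ‖ξ‖ ≤ k → ∀ η, ‖η - ξ‖ ≤ d →
      |max (outputValue h x γ η) r - max (outputValue h x γ ξ) r| ≤ r / 4 := by
    intro ξ hξ η hη
    have h1 := hball ξ hξ η hη
    have h2 := hlip ξ η (le_max_of_le_right (by linarith)) (le_max_of_le_right (by linarith))
    have h3 := hlip η ξ (le_max_of_le_right (by linarith)) (le_max_of_le_right (by linarith))
    rw [norm_sub_rev ξ η] at h2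
    have h4 : C * ‖η - ξ‖ ≤ C * d := by gcongr
    rw [abs_le]
    constructor <;> linarith
  refine ⟨d, hdpos, fun ξ hξ => ⟨hosc ξ hξ, fun μ hμ hrξ => ?_⟩⟩
  have hγ0 := hD.2.1.1.nonneg (norm_nonneg μ)
  have hμU : ‖μ‖ ≤ U := by
    refine hU _ ?_
    have h1 := hD.outputValue_le hB ξ
    have h2 := hD.2.2.1.mono (norm_nonneg _) ((hκh ξ).trans
      (hκ.mono (norm_nonneg _) (hξ.trans (le_abs_self k))))
    linarith
  have hvF : ‖f ξ μ‖ ≤ F := hF ξ μ (by linarith) hμU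
  refine ⟨c₀ / 2, half_pos hc₀,
    min 1 (min (r / (2 * c₀)) (min (1 / (2 * F + 1)) (c₀ / (4 * (C * Q + 1))))), by positivity, ?_⟩
  intro η hη t ht htlt η' hη'
  have ht1 : t ≤ 1 := htlt.le.trans (min_le_left _ _)
  have ht2 : t * (2 * c₀) ≤ r := by
    rw [← le_div_iff₀ (by positivity)]
    exact htlt.le.trans ((min_le_right _ _).trans (min_le_left _ _))
  have ht3 : t * (2 * F + 1) ≤ 1 := by
    rw [← le_div_iff₀ (by positivity)]
    exact htlt.le.trans ((min_le_right _ _).trans ((min_le_right _ _).trans (min_le_left _ _)))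
  have ht4 : t * (4 * (C * Q + 1)) ≤ c₀ := by
    rw [← le_div_iff₀ (by positivity)]
    exact htlt.le.trans ((min_le_right _ _).trans ((min_le_right _ _).trans (min_le_right _ _)))
  have hηk := hball ξ hξ η hη
  have hξη := (abs_le.1 (hosc ξ hξ η hη)).1
  rw [max_eq_left (by linarith : r ≤ outputValue h x γ ξ)] at hξη
  have hη1 : max (outputValue h x γ η) r = outputValue h x γ η := by
    rcases le_total (outputValue h x γ η) r with h1 | h1
    · rw [max_eq_right h1] at hξη
      linarith
    · exact max_eq_left h1
  rw [hη1] at hξη ⊢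
  have h1 := hdec η μ hηk hμU (by linarith) (by linarith) t ht.le ht1
  have h2 : max (outputValue h x γ (x t η fun _ => μ)) r ≤ outputValue h x γ η - c₀ * t :=
    max_le h1 (by linarith)
  have htv : t * ‖f ξ μ‖ * d ≤ t * F * d := by gcongr
  have htd : t * F * d ≤ t * F := mul_le_of_le_one_right (by positivity) hd1
  have hη'n : ‖η'‖ ≤ k + 2 := by
    have e1 : η' = (η' - η - t • f ξ μ) + η + t • f ξ μ := by abel
    have e2 : ‖t • f ξ μ‖ ≤ t * F := by
      rw [norm_smul, Real.norm_of_nonneg ht.le]; gcongr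
    rw [e1]
    refine (norm_add₃_le).trans ?_
    linarith
  have hdist : ‖η' - x t η fun _ => μ‖ ≤ t * ((F + L) * d) + Q * t ^ 2 := by
    have e1 : (η' - x t η fun _ => μ) = (η' - η - t • f ξ μ) + t • (f ξ μ - f η μ) +
        -((x t η fun _ => μ) - (η + t • f η μ)) := by
      rw [smul_sub]; abel
    have e2 : ‖t • (f ξ μ - f η μ)‖ ≤ t * (L * d) := by
      rw [norm_smul, Real.norm_of_nonneg ht.le]
      have := hL ξ η μ (by linarith) hηk hμU
      rw [norm_sub_rev ξ η] at this
      have h3 : L * ‖η - ξ‖ ≤ L * d := by gcongr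
      exact mul_le_mul_of_nonneg_left (this.trans h3) ht.le
    have e3 := hQ η μ hηk hμU t ht.le
    rw [e1]
    refine (norm_add₃_le).trans ?_
    rw [norm_neg]
    nlinarith
  have h3 := hlip η' (x t η fun _ => μ) (le_max_of_le_right hη'n) (le_max_of_le_left
    (hR' η _ (isInput_const μ) (bddInput_const μ) hηk ((uNorm_const_le μ).trans hμU) t ht.le))
  have h4 : C * ‖η' - x t η fun _ => μ‖ ≤ C * (t * ((F + L) * d) + Q * t ^ 2) := by gcongr
  have h5 : C * (t * ((F + L) * d) + Q * t ^ 2) ≤ c₀ / 2 * t := by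
    have e1 : t * (C * (F + L) * d) ≤ t * (c₀ / 4) := by gcongr
    have e2 : t * (t * (4 * (C * Q + 1))) ≤ t * c₀ := by gcongr
    nlinarith
  linarith

/-- Smooth approximations of the value function from below. -/
lemma IsOutputDecay.exists_smooth_level (hD : IsOutputDecay h x β γ σ) (hB : IsBIBS f x)
    (hf : LocallyLipschitz fun q : EuclideanSpace ℝ (Fin n) × EuclideanSpace ℝ (Fin m) =>
      f q.1 q.2) (hh : LocallyLipschitz h) (hh0 : h 0 = 0) {r : ℝ} (hr : 0 < r) :
    ∃ V : EuclideanSpace ℝ (Fin n) → ℝ, ContDiff ℝ ∞ V ∧ (∀ ξ, 0 ≤ V ξ) ∧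
      (∀ ξ, V ξ ≤ outputValue h x γ ξ) ∧ (∀ ξ, outputValue h x γ ξ - 4 * r ≤ V ξ) ∧
      ∀ ξ μ, 0 < V ξ → 6 * γ ‖μ‖ ≤ outputValue h x γ ξ → fderiv ℝ V ξ (f ξ μ) < 0 := by
  choose d hd hdp using fun k : ℕ => hD.exists_radius hB hf hh hh0 hr k
  obtain ⟨δ, hδ, hδpos, hδd⟩ := exists_antitone_pos_le hd
  obtain ⟨W, hW, hWle, hleW, hWd⟩ := exists_smooth_approx
    (hD.continuous_max hB hf hh hh0 hr) hδ hδpos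
  have hup : ∀ ξ, W ξ ≤ max (outputValue h x γ ξ) r + r / 4 := fun ξ => hWle ξ _ fun η hη => by
    have := (abs_le.1 ((hdp _ ξ (Nat.le_ceil _)).1 η (hη.trans (hδd _)))).2
    linarith
  have hlow : ∀ ξ, max (outputValue h x γ ξ) r - r / 4 ≤ W ξ := fun ξ => hleW ξ _ fun η hη => by
    have := (abs_le.1 ((hdp _ ξ (Nat.le_ceil _)).1 η (hη.trans (hδd _)))).1
    linarith
  have hV0 : ∀ ξ, 0 ≤ outputValue h x γ ξ := fun ξ =>
    (norm_nonneg _).trans (hD.norm_le_outputValue hB ξ)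
  refine ⟨fun ξ => smoothPosPart r (W ξ - 2 * r),
    (contDiff_smoothPosPart r).comp (hW.sub contDiff_const), fun ξ => smoothPosPart_nonneg hr,
    fun ξ => ?_, fun ξ => ?_, fun ξ μ hpos hμ => ?_⟩
  · refine (smoothPosPart_le hr).trans (max_le ?_ (hV0 ξ))
    rcases max_cases (outputValue h x γ ξ) r with h1 | h1 <;> linarith [hup ξ, hV0 ξ]
  · have := sub_le_smoothPosPart (v := W ξ - 2 * r) hr
    linarith [hlow ξ, le_max_left (outputValue h x γ ξ) r]
  · have hWpos : 0 < W ξ - 2 * r := by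
      by_contra! hle
      simp only [smoothPosPart_of_nonpos hr hle, lt_irrefl] at hpos
    have hξr : 7 / 4 * r < outputValue h x γ ξ := by
      rcases max_cases (outputValue h x γ ξ) r with h1 | h1 <;> linarith [hup ξ]
    obtain ⟨c, hc, t₀, ht₀, hdec⟩ := (hdp _ ξ (Nat.le_ceil _)).2 μ hμ hξr
    have h1 : fderiv ℝ W ξ (f ξ μ) ≤ -c := by
      refine hWd ξ (f ξ μ) c t₀ ht₀ fun η hη t ht htlt η' hη' => ?_
      refine hdec η (hη.trans (hδd _)) t ht htlt η' (hη'.trans ?_)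
      gcongr
      exact hδd _
    have h2 : HasFDerivAt (fun ξ => W ξ - 2 * r) (fderiv ℝ W ξ) ξ :=
      ((hW.differentiable (by simp)) ξ).hasFDerivAt.sub_const _
    have h3 := (((contDiff_smoothPosPart r).differentiable (by simp))
      (W ξ - 2 * r)).hasDerivAt.comp_hasFDerivAt ξ h2
    have h4 : HasFDerivAt (fun ξ => smoothPosPart r (W ξ - 2 * r)) _ ξ := h3
    rw [h4.fderiv]
    have h5 := deriv_smoothPosPart_pos hr hWpos
    simp only [smul_apply, smul_eq_mul]
    nlinarith

end SmoothLevels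

section SmoothSeries

open scoped ContDiff

variable {E : Type*} [NormedAddCommGroup E] [InnerProductSpace ℝ E] [FiniteDimensional ℝ E]

/-- A smooth cutoff which equals `1` on the closed ball of radius `j + 1`. -/
def ballCutoff (E : Type*) [NormedAddCommGroup E] [InnerProductSpace ℝ E] [FiniteDimensional ℝ E]
    (j : ℕ) : ContDiffBump (0 : E) :=
  ⟨j + 1, j + 2, by positivity, by linarith⟩

lemma exists_bound_iteratedFDeriv_cutoff {W : E → ℝ} (hW : ContDiff ℝ ∞ W) (i j : ℕ) :
    ∃ C, 0 ≤ C ∧ ∀ ξ, ‖iteratedFDeriv ℝ i (fun ξ => W ξ * ballCutoff E j ξ) ξ‖ ≤ C := by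
  have hs : ContDiff ℝ ∞ (fun ξ => W ξ * ballCutoff E j ξ) := hW.mul (ballCutoff E j).contDiff
  have hc : HasCompactSupport (fun ξ => W ξ * ballCutoff E j ξ) :=
    (ballCutoff E j).hasCompactSupport.mul_left
  obtain ⟨C, hC⟩ := (hc.iteratedFDeriv (𝕜 := ℝ) i).exists_bound_of_continuous
    (hs.continuous_iteratedFDeriv (mod_cast le_top))
  exact ⟨C, (norm_nonneg _).trans (hC 0), hC⟩

lemma exists_bound_fderiv_ball {W : E → ℝ} (hW : ContDiff ℝ ∞ W) (R : ℝ) :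
    ∃ C, 0 ≤ C ∧ ∀ ξ, ‖ξ‖ ≤ R → ‖fderiv ℝ W ξ‖ ≤ C := by
  obtain ⟨C, hC⟩ := (isCompact_closedBall (0 : E) R).exists_bound_of_continuousOn
    (hW.continuous_fderiv (by simp)).continuousOn
  exact ⟨max C 0, le_max_right _ _, fun ξ hξ =>
    (hC ξ (mem_closedBall_zero_iff.2 hξ)).trans (le_max_left _ _)⟩

lemma exists_smooth_series {W : ℕ → E → ℝ} (hW : ∀ k, ContDiff ℝ ∞ (W k)) {B : E → ℝ}
    (hWB : ∀ k ξ, |W k ξ| ≤ B ξ) :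
    ∃ c : ℕ → ℝ, (∀ k, 0 < c k) ∧ (∀ k, c k ≤ (1 / 2 : ℝ) ^ k) ∧
      (ContDiff ℝ ∞ fun ξ => ∑' k, c k * W k ξ) ∧
      ∀ ξ v, HasSum (fun k => c k * fderiv ℝ (W k) ξ v)
        (fderiv ℝ (fun ξ => ∑' k, c k * W k ξ) ξ v) := by
  choose C hC0 hC using fun k i j => exists_bound_iteratedFDeriv_cutoff (hW k) i j
  choose D hD0 hD using fun k (R : ℝ) => exists_bound_fderiv_ball (hW k) R
  set M : ℕ → ℝ := fun k =>
    ∑ i ∈ Finset.range (k + 1), ∑ j ∈ Finset.range (k + 1), C k i j + D k k with hM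
  have hMC : ∀ k i j, i ≤ k → j ≤ k → C k i j ≤ M k := by
    intro k i j hi hj
    have h1 : C k i j ≤ ∑ j ∈ Finset.range (k + 1), C k i j :=
      Finset.single_le_sum (f := fun j => C k i j) (fun j _ => hC0 k i j)
        (Finset.mem_range.2 (by omega))
    have h2 := Finset.single_le_sum (f := fun i => ∑ j ∈ Finset.range (k + 1), C k i j)
      (fun i _ => Finset.sum_nonneg fun j _ => hC0 k i j) (Finset.mem_range.2 (by omega : i < k + 1))
    exact (h1.trans h2).trans (le_add_of_nonneg_right (hD0 k k))
  have hMD : ∀ k, D k k ≤ M k := fun k => le_add_of_nonneg_left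
    (Finset.sum_nonneg fun i _ => Finset.sum_nonneg fun j _ => hC0 k i j)
  have hM0 : ∀ k, 0 ≤ M k := fun k => (hD0 k k).trans (hMD k)
  have hpow : Summable fun k : ℕ => (1 / 2 : ℝ) ^ k := summable_geometric_two
  set c : ℕ → ℝ := fun k => (1 / 2 : ℝ) ^ k / (1 + M k) with hc
  have hcpos : ∀ k, 0 < c k := fun k => by have := hM0 k; positivity
  have hcle : ∀ k, c k ≤ (1 / 2 : ℝ) ^ k := fun k =>
    div_le_self (by positivity) (by linarith [hM0 k])
  have hcM : ∀ k, c k * M k ≤ (1 / 2 : ℝ) ^ k := by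
    intro k
    have h1 := hM0 k
    rw [hc]
    simp only
    rw [div_mul_eq_mul_div, div_le_iff₀ (by positivity)]
    exact mul_le_mul_of_nonneg_left (by linarith) (by positivity)
  have hsum : ∀ ξ, Summable fun k => c k * W k ξ := by
    intro ξ
    refine Summable.of_norm_bounded (hpow.mul_right (B ξ)) fun k => ?_
    rw [norm_mul, Real.norm_eq_abs, Real.norm_eq_abs, abs_of_pos (hcpos k)]
    exact mul_le_mul (hcle k) (hWB k ξ) (abs_nonneg _) (by positivity)
  refine ⟨c, hcpos, hcle, ?_, ?_⟩
  · rw [contDiff_iff_contDiffAt]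
    intro ξ
    obtain ⟨j, hj⟩ := exists_nat_gt ‖ξ‖
    have hsm : ContDiff ℝ ∞ fun ξ => ∑' k, c k • (W k ξ * ballCutoff E j ξ) := by
      refine contDiff_tsum_of_eventually (v := fun _ k => (1 / 2 : ℝ) ^ k)
        (fun k => ((hW k).mul (ballCutoff E j).contDiff).const_smul (c k)) (fun _ _ => hpow) ?_
      intro i _
      rw [Nat.cofinite_eq_atTop]
      filter_upwards [eventually_ge_atTop (max i j)] with k hk η
      have h1 := iteratedFDeriv_const_smul_apply' (𝕜 := ℝ) (i := i) (x := η) (a := c k)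
        (f := fun ξ => W k ξ * ballCutoff E j ξ)
        (((hW k).mul (ballCutoff E j).contDiff).contDiffAt.of_le (mod_cast le_top))
      rw [h1, norm_smul, Real.norm_eq_abs, abs_of_pos (hcpos k)]
      refine le_trans ?_ (hcM k)
      exact mul_le_mul_of_nonneg_left ((hC k i j η).trans
        (hMC k i j ((le_max_left _ _).trans hk) ((le_max_right _ _).trans hk))) (hcpos k).le
    refine hsm.contDiffAt.congr_of_eventuallyEq ?_
    have hnear : ∀ᶠ η in 𝓝 ξ, ‖η‖ < j := continuous_norm.continuousAt.eventually_lt_const hj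
    filter_upwards [hnear] with η hη
    have h1 : ballCutoff E j η = 1 := (ballCutoff E j).one_of_mem_closedBall
      (mem_closedBall_zero_iff.2 (by change ‖η‖ ≤ j + 1; linarith))
    simp [h1]
  · intro ξ v
    obtain ⟨j, hj⟩ := exists_nat_gt ‖ξ‖
    have hfin : Summable fun k => if k < j then D k j else 0 :=
      summable_of_ne_finset_zero (s := Finset.range j) fun k hk => by
        simpa using fun h => absurd h (by simpa using hk)
    have hbd : ∀ k, ∀ η ∈ Metric.ball (0 : E) j,
        ‖c k • fderiv ℝ (W k) η‖ ≤ (1 / 2 : ℝ) ^ k + if k < j then D k j else 0 := by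
      intro k η hη
      rw [mem_ball_zero_iff] at hη
      rw [norm_smul, Real.norm_eq_abs, abs_of_pos (hcpos k)]
      split_ifs with hkj
      · have h1 : c k ≤ 1 := (hcle k).trans (pow_le_one₀ (by norm_num) (by norm_num))
        have h2 := hD k j η hη.le
        have h3 : (0 : ℝ) ≤ (1 / 2 : ℝ) ^ k := by positivity
        nlinarith [norm_nonneg (fderiv ℝ (W k) η), hD0 k j, hcpos k]
      · have h1 : (j : ℝ) ≤ k := by exact_mod_cast not_lt.1 hkj
        have h2 := hD k k η (by linarith)
        rw [add_zero]
        exact (mul_le_mul_of_nonneg_left (h2.trans (hMD k)) (hcpos k).le).trans (hcM k)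
    have hmem : ξ ∈ Metric.ball (0 : E) j := by simpa using hj
    have hder := hasFDerivAt_tsum_of_isPreconnected (hpow.add hfin) Metric.isOpen_ball
      (convex_ball (0 : E) (j : ℝ)).isPreconnected
      (f := fun k ξ => c k * W k ξ) (f' := fun k ξ => c k • fderiv ℝ (W k) ξ)
      (fun k η _ => (((hW k).differentiable (by simp)) η).hasFDerivAt.const_mul (c k)) hbd hmem
      (hsum ξ) hmem
    rw [hder.fderiv]
    have hs : Summable fun k => c k • fderiv ℝ (W k) ξ :=
      Summable.of_norm_bounded (hpow.add hfin) fun k => hbd k ξ hmem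
    simpa using hs.hasSum.mapL (ContinuousLinearMap.apply ℝ ℝ v)

end SmoothSeries

section DecayRate

open scoped ContDiff

lemma exists_isClassK_le {ψ : ℝ → ℝ → ℝ} (hmono : ∀ r, Monotone fun s => ψ s r)
    (hanti : ∀ s, Antitone (ψ s)) (hpos : ∀ r s, 0 < s → 0 < ψ s r) (hle : ∀ s r, ψ s r ≤ 1) :
    ∃ α : ℝ → ℝ → ℝ, (∀ r, IsClassK fun s => α s r) ∧
      (∀ s, 0 ≤ s → Antitone (α s)) ∧ ∀ r s, 0 < s → α s r ≤ ψ s r := by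
  have havg : ∀ r s, 0 < s →
      0 < dyadicAvg (fun s => ψ s r) (s / 2) ∧ dyadicAvg (fun s => ψ s r) (s / 2) ≤ ψ s r := by
    intro r s hs
    refine ⟨(hpos r (s / 2) (by linarith)).trans_le
      (le_dyadicAvg (hmono r) (by linarith : 0 ≤ s / 2)), ?_⟩
    have := dyadicAvg_le (hmono r) (by linarith : 0 ≤ s / 2)
    rwa [mul_div_cancel₀ s two_ne_zero] at this
  have hfrac : ∀ s : ℝ, 0 < s → s / (1 + s) ≤ 1 ∧ s / (1 + s) ≤ s := by
    intro s hs
    exact ⟨(div_le_one (by linarith)).2 (by linarith), div_le_self hs.le (by linarith)⟩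
  refine ⟨fun s r => s / (1 + s) * dyadicAvg (fun s => ψ s r) (s / 2), fun r => ⟨?_, ?_, ?_⟩,
    fun s hs r r' hrr => ?_, fun r s hs => ?_⟩
  · intro s hs
    rcases (mem_Ici.1 hs).eq_or_lt with rfl | hs
    · simp only [ContinuousWithinAt, zero_div, zero_mul]
      refine squeeze_zero_norm' (a := fun s => s) ?_ (tendsto_id.mono_left nhdsWithin_le_nhds)
      filter_upwards [self_mem_nhdsWithin] with s hs
      rcases (mem_Ici.1 hs).eq_or_lt with rfl | hs
      · simp
      · have h1 := havg r s hs
        have h2 := hfrac s hs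
        have h3 : 0 < s / (1 + s) := by positivity
        rw [Real.norm_eq_abs, abs_of_pos (mul_pos h3 h1.1)]
        nlinarith [hle s r]
    · refine ContinuousAt.continuousWithinAt (ContinuousAt.mul ?_ ?_)
      · exact continuousAt_id.div (by fun_prop) (by simp; linarith)
      · refine ContinuousAt.comp (f := fun s : ℝ => s / 2) (g := dyadicAvg fun s => ψ s r) ?_
          (by fun_prop)
        exact (continuousOn_dyadicAvg (hmono r)).continuousAt (Ioi_mem_nhds (by linarith))
  · intro s hs t ht hst
    have hs : 0 ≤ s := hs
    have ht : 0 < t := hs.trans_lt hst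
    have h1 := (havg r t ht).1
    have h2 : s / (1 + s) < t / (1 + t) := by
      rw [div_lt_div_iff₀ (by linarith) (by linarith)]
      linarith
    have h3 : dyadicAvg (fun s => ψ s r) (s / 2) ≤ dyadicAvg (fun s => ψ s r) (t / 2) :=
      dyadicAvg_monotoneOn (hmono r) (mem_Ici.2 (by linarith)) (mem_Ici.2 (by linarith))
        (by linarith)
    have h4 : 0 ≤ s / (1 + s) := by positivity
    simp only
    nlinarith
  · simp
  · have h1 : dyadicAvg (fun s => ψ s r') (s / 2) ≤ dyadicAvg (fun s => ψ s r) (s / 2) :=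
      intervalIntegral.integral_mono_on (by norm_num)
        (intervalIntegrable_comp_mul (hmono r') (by linarith))
        (intervalIntegrable_comp_mul (hmono r) (by linarith)) fun τ _ => hanti _ hrr
    exact mul_le_mul_of_nonneg_left h1 (by positivity)
  · have h1 := havg r s hs
    have h2 := hfrac s hs
    simp only
    nlinarith

variable {E F : Type*} [NormedAddCommGroup E] [NormedSpace ℝ E] [FiniteDimensional ℝ E]
  [NormedAddCommGroup F] [NormedSpace ℝ F] [FiniteDimensional ℝ F]

lemma exists_decay_rate {f : E → F → E} {V : E → ℝ} {χ : ℝ → ℝ}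
    (hf : Continuous fun q : E × F => f q.1 q.2) (hV : ContDiff ℝ ∞ V) (hV0 : ∀ ξ, 0 ≤ V ξ)
    (hχ : IsClassKInfty χ)
    (hdec : ∀ ξ μ, 0 < V ξ → χ ‖μ‖ ≤ V ξ → fderiv ℝ V ξ (f ξ μ) < 0) :
    ∃ α : ℝ → ℝ → ℝ, (∀ r ∈ Ici (0 : ℝ), IsClassK fun s => α s r) ∧
      (∀ s ∈ Ici (0 : ℝ), AntitoneOn (fun r => α s r) (Ici 0)) ∧
      ∀ ξ μ, χ ‖μ‖ ≤ V ξ → fderiv ℝ V ξ (f ξ μ) ≤ -α (V ξ) ‖ξ‖ := by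
  have hzero : ∀ ξ, V ξ = 0 → fderiv ℝ V ξ = 0 := fun ξ hξ =>
    IsLocalMin.fderiv_eq_zero (Eventually.of_forall fun η => by rw [hξ]; exact hV0 η)
  have hdec0 : ∀ ξ μ, χ ‖μ‖ ≤ V ξ → 0 ≤ -fderiv ℝ V ξ (f ξ μ) := by
    intro ξ μ hμ
    rcases (hV0 ξ).eq_or_lt with h0 | h0
    · simp [hzero ξ h0.symm]
    · linarith [hdec ξ μ h0 hμ]
  set S : ℝ → ℝ → Set ℝ := fun s r => insert 1 ((fun q : E × F => -fderiv ℝ V q.1 (f q.1 q.2)) ''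
    {q | ‖q.1‖ ≤ r ∧ s ≤ V q.1 ∧ χ ‖q.2‖ ≤ V q.1}) with hS
  have hSnonneg : ∀ s r, ∀ a ∈ S s r, 0 ≤ a := by
    rintro s r a (rfl | ⟨q, hq, rfl⟩)
    · exact zero_le_one
    · exact hdec0 _ _ hq.2.2
  have hSbdd : ∀ s r, BddBelow (S s r) := fun s r => ⟨0, hSnonneg s r⟩
  have hSne : ∀ s r, (S s r).Nonempty := fun s r => ⟨1, mem_insert _ _⟩
  have hcont : Continuous fun q : E × F => -fderiv ℝ V q.1 (f q.1 q.2) :=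
    (((hV.continuous_fderiv (by simp)).comp continuous_fst).clm_apply hf).neg
  have hpos : ∀ r s, 0 < s → 0 < sInf (S s r) := by
    intro r s hs
    obtain ⟨B, hB⟩ := (isCompact_closedBall (0 : E) r).exists_bound_of_continuousOn
      hV.continuous.continuousOn
    obtain ⟨U, hU⟩ := (hχ.2.eventually_gt_atTop B).exists_forall_of_atTop
    set K : Set (E × F) := (Metric.closedBall 0 r ×ˢ Metric.closedBall 0 U) ∩
      {q | s ≤ V q.1 ∧ χ ‖q.2‖ ≤ V q.1} with hK
    have hχc : Continuous fun q : E × F => χ ‖q.2‖ :=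
      hχ.1.1.comp_continuous (by fun_prop) fun q => norm_nonneg _
    have hVc : Continuous fun q : E × F => V q.1 := hV.continuous.comp continuous_fst
    have hKc : IsCompact K := ((isCompact_closedBall _ _).prod (isCompact_closedBall _ _)).inter_right
      ((isClosed_le continuous_const hVc).inter (isClosed_le hχc hVc))
    have hKS : ∀ q : E × F, ‖q.1‖ ≤ r → s ≤ V q.1 → χ ‖q.2‖ ≤ V q.1 → q ∈ K := by
      intro q h1 h2 h3
      refine ⟨⟨mem_closedBall_zero_iff.2 h1, mem_closedBall_zero_iff.2 ?_⟩, h2, h3⟩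
      by_contra! hlt
      have h4 := hU _ hlt.le
      have h5 := (le_abs_self _).trans (hB q.1 (mem_closedBall_zero_iff.2 h1))
      linarith
    have hmin : ∃ c, 0 < c ∧ ∀ q ∈ K, c ≤ -fderiv ℝ V q.1 (f q.1 q.2) := by
      rcases K.eq_empty_or_nonempty with h | h
      · exact ⟨1, one_pos, by simp [h]⟩
      · obtain ⟨q, hq, hqmin⟩ := hKc.exists_isMinOn h hcont.continuousOn
        exact ⟨_, neg_pos.2 (hdec q.1 q.2 (hs.trans_le hq.2.1) hq.2.2), fun q' hq' => hqmin hq'⟩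
    obtain ⟨c, hc, hcK⟩ := hmin
    refine (lt_min one_pos hc).trans_le (le_csInf (hSne s r) ?_)
    rintro a (rfl | ⟨q, hq, rfl⟩)
    · exact min_le_left _ _
    · exact (min_le_right _ _).trans (hcK q (hKS q hq.1 hq.2.1 hq.2.2))
  obtain ⟨α, hα, hanti, hle⟩ := exists_isClassK_le (ψ := fun s r => sInf (S s r))
    (fun r s t hst => csInf_le_csInf (hSbdd _ _) (hSne _ _) (insert_subset_insert
      (image_mono fun q hq => ⟨hq.1, hst.trans hq.2.1, hq.2.2⟩)))
    (fun s r r' hrr => csInf_le_csInf (hSbdd _ _) (hSne _ _) (insert_subset_insert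
      (image_mono fun q hq => ⟨hq.1.trans hrr, hq.2⟩))) hpos
    (fun s r => csInf_le (hSbdd _ _) (mem_insert _ _))
  refine ⟨α, fun r _ => hα r, fun s hs => (hanti s hs).antitoneOn _, fun ξ μ hμ => ?_⟩
  rcases (hV0 ξ).eq_or_lt with h0 | h0
  · rw [hzero ξ h0.symm, ← h0]
    simpa using (hα ‖ξ‖).2.2.le
  · have h1 := hle ‖ξ‖ (V ξ) h0
    have h2 : sInf (S (V ξ) ‖ξ‖) ≤ -fderiv ℝ V ξ (f ξ μ) :=
      csInf_le (hSbdd _ _) (mem_insert_of_mem _ ⟨(ξ, μ), ⟨le_rfl, le_rfl, hμ⟩, rfl⟩)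
    linarith

lemma isClassKInfty_tsum_posPart {c : ℕ → ℝ} (hc : ∀ k, 0 < c k)
    (hc2 : ∀ k, c k ≤ (1 / 2 : ℝ) ^ k) {r : ℕ → ℝ} (hr : ∀ k, 0 ≤ r k)
    (hr0 : Tendsto r atTop (𝓝 0)) :
    (∀ s, Summable fun k => c k * max (s - r k) 0) ∧
      IsClassKInfty fun s => ∑' k, c k * max (s - r k) 0 := by
  have hcs : Summable c := Summable.of_nonneg_of_le (fun k => (hc k).le) hc2 summable_geometric_two
  have hsum : ∀ s, Summable fun k => c k * max (s - r k) 0 := by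
    intro s
    refine Summable.of_nonneg_of_le (fun k => mul_nonneg (hc k).le (le_max_right _ _))
      (fun k => ?_) (hcs.mul_right |s|)
    exact mul_le_mul_of_nonneg_left
      (max_le ((sub_le_self _ (hr k)).trans (le_abs_self s)) (abs_nonneg s)) (hc k).le
  refine ⟨hsum, ⟨?_, ?_, ?_⟩, ?_⟩
  · refine Continuous.continuousOn (LipschitzWith.continuous (K := (∑' k, c k).toNNReal) ?_)
    refine LipschitzWith.of_dist_le_mul fun s t => ?_
    rw [Real.coe_toNNReal _ (tsum_nonneg fun k => (hc k).le), Real.dist_eq, Real.dist_eq,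
      ← (hsum s).tsum_sub (hsum t), ← Real.norm_eq_abs]
    refine tsum_of_norm_bounded (hcs.hasSum.mul_right |s - t|) fun k => ?_
    rw [← mul_sub, norm_mul, Real.norm_eq_abs, Real.norm_eq_abs, abs_of_pos (hc k)]
    refine mul_le_mul_of_nonneg_left ?_ (hc k).le
    have := abs_max_sub_max_le_abs (s - r k) (t - r k) 0
    rwa [sub_sub_sub_cancel_right] at this
  · intro s hs t _ hst
    have ht : 0 < t := lt_of_le_of_lt hs hst
    obtain ⟨k, hk⟩ := (hr0.eventually_lt_const ht).exists
    refine Summable.tsum_lt_tsum (i := k) (fun j => ?_) ?_ (hsum s) (hsum t)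
    · exact mul_le_mul_of_nonneg_left (max_le_max_right _ (by linarith)) (hc j).le
    · exact mul_lt_mul_of_pos_left (max_lt (lt_max_of_lt_left (by linarith))
        (lt_max_of_lt_left (by linarith))) (hc k)
  · have : ∀ k, max (0 - r k) 0 = 0 := fun k => max_eq_right (by linarith [hr k])
    simp only [this, mul_zero, tsum_zero]
  · have h1 : Tendsto (fun s => c 0 * (s - r 0)) atTop atTop :=
      (tendsto_atTop_add_const_right _ _ tendsto_id).const_mul_atTop (hc 0)
    refine tendsto_atTop_mono (fun s => ?_) h1
    refine le_trans (mul_le_mul_of_nonneg_left (le_max_left _ _) (hc 0).le)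
      ((hsum s).le_tsum 0 fun k _ => mul_nonneg (hc k).le (le_max_right _ _))

end DecayRate

section Converse

open scoped ContDiff

variable {n m p : ℕ}
  {f : EuclideanSpace ℝ (Fin n) → EuclideanSpace ℝ (Fin m) → EuclideanSpace ℝ (Fin n)}
  {h : EuclideanSpace ℝ (Fin n) → EuclideanSpace ℝ (Fin p)}
  {x : ℝ → EuclideanSpace ℝ (Fin n) → (ℝ → EuclideanSpace ℝ (Fin m)) → EuclideanSpace ℝ (Fin n)}

lemma IsOLIOS.exists_isOLIOSLyapunov (hO : IsOLIOS h x) (hB : IsBIBS f x)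
    (hf : LocallyLipschitz fun q : EuclideanSpace ℝ (Fin n) × EuclideanSpace ℝ (Fin m) =>
      f q.1 q.2) (hh : LocallyLipschitz h) (hh0 : h 0 = 0) :
    ∃ V, IsOLIOSLyapunov f h V := by
  obtain ⟨β, γ, σ, hD⟩ := hO.exists_isOutputDecay
  have hlow := hD.norm_le_outputValue hB
  have hup := hD.outputValue_le hB
  choose W hWs hW0 hWle hWge hWdec using fun k : ℕ =>
    hD.exists_smooth_level hB hf hh hh0 (r := (1 / 2 : ℝ) ^ k) (by positivity)
  obtain ⟨c, hc, hc2, hVs, hVd⟩ := exists_smooth_series hWs (B := outputValue h x γ)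
    fun k ξ => by rw [abs_of_nonneg (hW0 k ξ)]; exact hWle k ξ
  set V : EuclideanSpace ℝ (Fin n) → ℝ := fun ξ => ∑' k, c k * W k ξ with hV
  have hval0 : ∀ ξ, 0 ≤ outputValue h x γ ξ := fun ξ => (norm_nonneg _).trans (hlow ξ)
  have hterm0 : ∀ ξ k, 0 ≤ c k * W k ξ := fun ξ k => mul_nonneg (hc k).le (hW0 k ξ)
  have hterm : ∀ ξ k, c k * W k ξ ≤ (1 / 2 : ℝ) ^ k * outputValue h x γ ξ := fun ξ k =>
    mul_le_mul (hc2 k) (hWle k ξ) (hW0 k ξ) (by positivity)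
  have hgeom : ∀ ξ, HasSum (fun k : ℕ => (1 / 2 : ℝ) ^ k * outputValue h x γ ξ)
      (2 * outputValue h x γ ξ) := fun ξ => hasSum_geometric_two.mul_right _
  have hsum : ∀ ξ, Summable fun k => c k * W k ξ := fun ξ =>
    Summable.of_nonneg_of_le (hterm0 ξ) (hterm ξ) (hgeom ξ).summable
  have hV0 : ∀ ξ, 0 ≤ V ξ := fun ξ => tsum_nonneg (hterm0 ξ)
  have hV2 : ∀ ξ, V ξ ≤ 2 * outputValue h x γ ξ := fun ξ =>
    hasSum_le (hterm ξ) (hsum ξ).hasSum (hgeom ξ)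
  have hγ12 : IsClassKInfty fun s => 12 * γ s :=
    ⟨hD.2.1.1.const_mul (by norm_num), hD.2.1.2.const_mul_atTop (by norm_num)⟩
  have hrad : Tendsto (fun k : ℕ => 4 * (1 / 2 : ℝ) ^ k) atTop (𝓝 0) := by
    simpa using (tendsto_pow_atTop_nhds_zero_of_lt_one (r := (1 / 2 : ℝ)) (by norm_num)
      (by norm_num)).const_mul 4
  obtain ⟨hαsum, hα⟩ := isClassKInfty_tsum_posPart hc hc2 (fun k => by positivity) hrad
  have hdec : ∀ ξ μ, 0 < V ξ → 12 * γ ‖μ‖ ≤ V ξ → fderiv ℝ V ξ (f ξ μ) < 0 := by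
    intro ξ μ hpos hμ
    have hgain : 6 * γ ‖μ‖ ≤ outputValue h x γ ξ := by linarith [hV2 ξ]
    have hle : ∀ k, c k * fderiv ℝ (W k) ξ (f ξ μ) ≤ 0 := by
      intro k
      refine mul_nonpos_of_nonneg_of_nonpos (hc k).le ?_
      rcases (hW0 k ξ).eq_or_lt with h0 | h0
      · have hmin : fderiv ℝ (W k) ξ = 0 := IsLocalMin.fderiv_eq_zero
          (Eventually.of_forall fun η => by rw [← h0]; exact hW0 k η)
        simp [hmin]
      · exact (hWdec k ξ μ h0 hgain).le
    obtain ⟨k, hk⟩ : ∃ k, 0 < W k ξ := by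
      by_contra! hall
      have hz : ∀ k, W k ξ = 0 := fun k => le_antisymm (hall k) (hW0 k ξ)
      simp [hV, hz] at hpos
    rw [← (hVd ξ (f ξ μ)).tsum_eq]
    have hlt := Summable.tsum_lt_tsum (i := k) hle
      (mul_neg_of_pos_of_neg (hc k) (hWdec k ξ μ hk hgain)) (hVd ξ (f ξ μ)).summable summable_zero
    simpa using hlt
  obtain ⟨α₃, hα₃⟩ := exists_decay_rate hf.continuous hVs hV0 hγ12 hdec
  refine ⟨V, hVs, hV0, ⟨_, fun s => 4 * σ s + s, hα, (hD.2.2.1.const_mul (by norm_num)).add_id,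
    fun ξ => ⟨?_, ?_⟩⟩, _, hγ12.1, α₃, hα₃⟩
  · refine Summable.tsum_le_tsum (fun k => mul_le_mul_of_nonneg_left (max_le ?_ (hW0 k ξ)) (hc k).le)
      (hαsum _) (hsum ξ)
    linarith [hlow ξ, hWge k ξ]
  · have h1 := hup ξ
    have h2 := hV2 ξ
    have h3 := norm_nonneg (h ξ)
    simp only
    linarith

end Converse

/-- A BIBS system is OLIOS if and only if it admits an OLIOS-Lyapunov function. -/
theorem olios_iff_exists_oliosLyapunov {n m p : ℕ}
    (f : EuclideanSpace ℝ (Fin n) → EuclideanSpace ℝ (Fin m) → EuclideanSpace ℝ (Fin n))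
    (h : EuclideanSpace ℝ (Fin n) → EuclideanSpace ℝ (Fin p))
    (x : ℝ → EuclideanSpace ℝ (Fin n) → (ℝ → EuclideanSpace ℝ (Fin m)) →
      EuclideanSpace ℝ (Fin n))
    (hf : LocallyLipschitz fun q : EuclideanSpace ℝ (Fin n) × EuclideanSpace ℝ (Fin m) =>
      f q.1 q.2)
    (hf0 : f 0 0 = 0)
    (hh : LocallyLipschitz h) (hh0 : h 0 = 0)
    (hBIBS : IsBIBS f x) :
    IsOLIOS h x ↔ ∃ V : EuclideanSpace ℝ (Fin n) → ℝ, IsOLIOSLyapunov f h V :=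
  ⟨fun hO => hO.exists_isOLIOSLyapunov hBIBS hf hh hh0,
    fun ⟨_, hV⟩ => hBIBS.isOLIOS_of_isOLIOSLyapunov hf hh.continuous hh0 hV⟩
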